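/- Let λ0 ∈ ℝ, let g be an exchangeable prior, and let d be a pseudo symmetric design with c_{d22} > 0, q_d(x_d) > 0 and q_d(λ0) > 0, and set π_d = q_d(λ0)/(q_d(λ0) + (t−2) q_d(x_d)). Then d is A_{g,λ0}-optimal if and only if max_{s∈S} [ π_d q_s(x_d)/q_d(x_d) + (1 − π_d) q_s(λ0)/q_d(λ0) ] = 1. Moreover, in that case every sequence s with p_s > 0 attains this maximum. -/

import Mathlib

open Matrix MeasureTheory
open scoped Classical

noncomputable section

/-- A treatment sequence: assigns a treatment in `Fin t` to each period in `Fin p`. -/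
abbrev TrtSeq (p t : ℕ) := Fin p → Fin t

/-- Treatment/period incidence matrix `T_s`. -/
def Tmat {p t : ℕ} (s : TrtSeq p t) : Matrix (Fin p) (Fin t) ℝ :=
  Matrix.of fun k i => if s k = i then 1 else 0

/-- Carryover incidence matrix `F_s`: first row zero, row `k` records the treatment
in period `k-1`. -/
def Fmat {p t : ℕ} (s : TrtSeq p t) : Matrix (Fin p) (Fin t) ℝ :=
  Matrix.of fun k i =>
    if (k : ℕ) = 0 then 0
    else if s ⟨(k : ℕ) - 1, Nat.lt_of_le_of_lt (Nat.sub_le _ _) k.isLt⟩ = i then 1 else 0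

/-- The all-ones `m × m` matrix `J_m`. -/
def Jmat (m : ℕ) : Matrix (Fin m) (Fin m) ℝ := Matrix.of fun _ _ => 1

/-- `B_t = I_t - J_t / t`. -/
def Bmat (t : ℕ) : Matrix (Fin t) (Fin t) ℝ := 1 - ((t : ℝ))⁻¹ • Jmat t

/-- `B̃ = Σ⁻¹ - Σ⁻¹ J_p Σ⁻¹ / (1_p' Σ⁻¹ 1_p)`. -/
def Btil {p : ℕ} (S : Matrix (Fin p) (Fin p) ℝ) : Matrix (Fin p) (Fin p) ℝ :=
  S⁻¹ - (((fun _ => (1 : ℝ)) : Fin p → ℝ) ⬝ᵥ (S⁻¹ *ᵥ fun _ => (1 : ℝ)))⁻¹ •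
    (S⁻¹ * Jmat p * S⁻¹)

/-- `G_1(s) = T_s`, `G_2(s) = F_s`. -/
def Gmat {p t : ℕ} (i : Fin 2) (s : TrtSeq p t) : Matrix (Fin p) (Fin t) ℝ :=
  if i = 0 then Tmat s else Fmat s

/-- An approximate design: nonnegative weights summing to one. -/
def IsDesign {p t : ℕ} (w : TrtSeq p t → ℝ) : Prop :=
  (∀ s, 0 ≤ w s) ∧ ∑ s : TrtSeq p t, w s = 1

/-- `Ĉ_{sij} = B_t G_i(s)' B̃ G_j(s) B_t`. -/
def Chat {p t : ℕ} (S : Matrix (Fin p) (Fin p) ℝ) (s : TrtSeq p t) (i j : Fin 2) :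
    Matrix (Fin t) (Fin t) ℝ :=
  Bmat t * (Gmat i s)ᵀ * Btil S * Gmat j s * Bmat t

/-- `c_{sij} = tr Ĉ_{sij}`. -/
def cseq {p t : ℕ} (S : Matrix (Fin p) (Fin p) ℝ) (s : TrtSeq p t) (i j : Fin 2) : ℝ :=
  (Chat S s i j).trace

/-- `Ĉ_{dij} = n ∑_s p_s Ĉ_{sij}`. -/
def ChatD {p t : ℕ} (n : ℕ) (S : Matrix (Fin p) (Fin p) ℝ) (w : TrtSeq p t → ℝ)
    (i j : Fin 2) : Matrix (Fin t) (Fin t) ℝ :=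
  (n : ℝ) • ∑ s : TrtSeq p t, w s • Chat S s i j

/-- `C_{dij} = Ĉ_{dij} - n (∑_s p_s G_i(s) B_t)' B̃ (∑_s p_s G_j(s) B_t)`. -/
def CD {p t : ℕ} (n : ℕ) (S : Matrix (Fin p) (Fin p) ℝ) (w : TrtSeq p t → ℝ)
    (i j : Fin 2) : Matrix (Fin t) (Fin t) ℝ :=
  ChatD n S w i j -
    (n : ℝ) • ((∑ s : TrtSeq p t, w s • (Gmat i s * Bmat t))ᵀ * Btil S *
      (∑ s : TrtSeq p t, w s • (Gmat j s * Bmat t)))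

/-- `c_{dij} = tr Ĉ_{dij} = n ∑_s p_s c_{sij}`. -/
def cD {p t : ℕ} (n : ℕ) (S : Matrix (Fin p) (Fin p) ℝ) (w : TrtSeq p t → ℝ)
    (i j : Fin 2) : ℝ :=
  (ChatD n S w i j).trace

/-- Fisher information matrix `C_{d,τ0,λ0}` for the direct treatment effects under the
proportional model. -/
def CInfo {p t : ℕ} (n : ℕ) (S : Matrix (Fin p) (Fin p) ℝ) (w : TrtSeq p t → ℝ)
    (τ0 : Fin t → ℝ) (l0 : ℝ) : Matrix (Fin t) (Fin t) ℝ :=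
  CD n S w 0 0 + l0 • (CD n S w 0 1 + CD n S w 1 0) + (l0 ^ 2) • CD n S w 1 1 -
    (τ0 ⬝ᵥ (CD n S w 1 1 *ᵥ τ0))⁻¹ •
      ((CD n S w 0 1 + l0 • CD n S w 1 1) * vecMulVec τ0 τ0 *
        (CD n S w 1 0 + l0 • CD n S w 1 1))

/-- Permutation matrix `S_σ` with `(S_σ)_{j,i} = 1` iff `i = σ j`. -/
def Smat {t : ℕ} (σ : Equiv.Perm (Fin t)) : Matrix (Fin t) (Fin t) ℝ :=
  Matrix.of fun j i => if i = σ j then 1 else 0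

/-- The relabelled sequence `σ ∘ s`. -/
def permSeq {p t : ℕ} (σ : Equiv.Perm (Fin t)) (s : TrtSeq p t) : TrtSeq p t := fun k => σ (s k)

/-- The design `σ d`, with weights `(σd)_s = p_{σ⁻¹ ∘ s}`. -/
def permDesign {p t : ℕ} (σ : Equiv.Perm (Fin t)) (w : TrtSeq p t → ℝ) : TrtSeq p t → ℝ :=
  fun s => w (permSeq σ⁻¹ s)

/-- A design is symmetric if its weights are invariant under treatment relabelling. -/
def IsSymmetricDesign {p t : ℕ} (w : TrtSeq p t → ℝ) : Prop :=
  ∀ (σ : Equiv.Perm (Fin t)) (s : TrtSeq p t), w (permSeq σ s) = w s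

/-- The symmetrized design `d*` with weights `p*_s = (1/t!) ∑_σ p_{σ⁻¹ ∘ s}`. -/
def symmetrize {p t : ℕ} (w : TrtSeq p t → ℝ) : TrtSeq p t → ℝ :=
  fun s => ((Nat.factorial t : ℝ))⁻¹ * ∑ σ : Equiv.Perm (Fin t), permDesign σ w s

/-- `q_s(x) = c_{s11} + 2 c_{s12} x + c_{s22} x²`. -/
def qSeq {p t : ℕ} (S : Matrix (Fin p) (Fin p) ℝ) (s : TrtSeq p t) (x : ℝ) : ℝ :=
  cseq S s 0 0 + 2 * cseq S s 0 1 * x + cseq S s 1 1 * x ^ 2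

/-- `q(x) = max_{s ∈ S} q_s(x)`. -/
def qMax (p t : ℕ) (S : Matrix (Fin p) (Fin p) ℝ) (x : ℝ) : ℝ :=
  sSup (Set.range fun s : TrtSeq p t => qSeq S s x)

/-- `y* = inf_x q(x)`. -/
def yStar (p t : ℕ) (S : Matrix (Fin p) (Fin p) ℝ) : ℝ := ⨅ x : ℝ, qMax p t S x

/-- `q_d(x) = ∑_s p_s q_s(x)`. -/
def qD {p t : ℕ} (S : Matrix (Fin p) (Fin p) ℝ) (w : TrtSeq p t → ℝ) (x : ℝ) : ℝ :=
  ∑ s : TrtSeq p t, w s * qSeq S s x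

/-- `x_d = -c_{d12}/c_{d22}`. -/
def xD {p t : ℕ} (n : ℕ) (S : Matrix (Fin p) (Fin p) ℝ) (w : TrtSeq p t → ℝ) : ℝ :=
  -(cD n S w 0 1) / cD n S w 1 1

/-- An exchangeable prior: a probability measure on `{τ : 1'τ = 0, τ ≠ 0}` that is
invariant under all coordinate permutations of `ℝ^t`. -/
def IsExchangeablePrior {t : ℕ} (g : Measure (Fin t → ℝ)) : Prop :=
  IsProbabilityMeasure g ∧
    g {τ : Fin t → ℝ | ¬((∑ i, τ i) = 0 ∧ τ ≠ 0)} = 0 ∧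
    ∀ σ : Equiv.Perm (Fin t), Measure.map (fun τ i => τ (σ i)) g = g

/-- `m_d(τ0) = min {ℓ' C_{d,τ0,λ0} ℓ : 1'ℓ = 0, ℓ'ℓ = 1}`. -/
def mD {p t : ℕ} (n : ℕ) (S : Matrix (Fin p) (Fin p) ℝ) (w : TrtSeq p t → ℝ) (l0 : ℝ)
    (τ0 : Fin t → ℝ) : ℝ :=
  sInf {v : ℝ | ∃ l : Fin t → ℝ, (∑ i, l i) = 0 ∧ l ⬝ᵥ l = 1 ∧
    v = l ⬝ᵥ (CInfo n S w τ0 l0 *ᵥ l)}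

/-- The E-criterion value `E_{g,λ0}(d) = ∫ m_d(τ0) g(dτ0)`. -/
def Ecrit {p t : ℕ} (n : ℕ) (S : Matrix (Fin p) (Fin p) ℝ) (g : Measure (Fin t → ℝ))
    (l0 : ℝ) (w : TrtSeq p t → ℝ) : ℝ :=
  ∫ τ0, mD n S w l0 τ0 ∂g

/-- Competing designs for E-optimality: designs with a.e. positive `τ0' C_{d22} τ0`
and `g`-integrable `m_d`. -/
def EAdmissible {p t : ℕ} (n : ℕ) (S : Matrix (Fin p) (Fin p) ℝ) (g : Measure (Fin t → ℝ))
    (l0 : ℝ) (w : TrtSeq p t → ℝ) : Prop :=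
  IsDesign w ∧ (∀ᵐ τ0 ∂g, 0 < τ0 ⬝ᵥ (CD n S w 1 1 *ᵥ τ0)) ∧
    Integrable (mD n S w l0) g

/-- `d` is `E_{g,λ0}`-optimal. -/
def EOptimal {p t : ℕ} (n : ℕ) (S : Matrix (Fin p) (Fin p) ℝ) (g : Measure (Fin t → ℝ))
    (l0 : ℝ) (w : TrtSeq p t → ℝ) : Prop :=
  ∀ w' : TrtSeq p t → ℝ, EAdmissible n S g l0 w' → Ecrit n S g l0 w' ≤ Ecrit n S g l0 w

/-- A pseudo symmetric design: treatments equireplicated in each period,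
and all `C_{dij}` completely symmetric. -/
def IsPseudoSymmetric {p t : ℕ} (n : ℕ) (S : Matrix (Fin p) (Fin p) ℝ)
    (w : TrtSeq p t → ℝ) : Prop :=
  (∀ (k : Fin p) (i : Fin t),
    (∑ s ∈ Finset.univ.filter fun s : TrtSeq p t => s k = i, w s) = 1 / (t : ℝ)) ∧
  ∀ i j : Fin 2, ∃ a b : ℝ, CD n S w i j = a • (1 : Matrix (Fin t) (Fin t) ℝ) + b • Jmat t

/-- Eigenvalues of a (Hermitian) matrix sorted increasingly with multiplicity. -/
def sortedEigs {t : ℕ} (C : Matrix (Fin t) (Fin t) ℝ) : Fin t → ℝ :=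
  if h : C.IsHermitian then (fun i => h.eigenvalues (Tuple.sort h.eigenvalues i))
  else fun _ => 0

/-- `Φ_D(C) = (∏_{i=1}^{t-1} a_i)^{1/(t-1)}` (eigenvalues sorted increasingly). -/
def PhiD {t : ℕ} (C : Matrix (Fin t) (Fin t) ℝ) : ℝ :=
  (∏ i ∈ Finset.univ.filter fun i : Fin t => (i : ℕ) ≠ 0, sortedEigs C i) ^ (((t : ℝ) - 1)⁻¹)

/-- `Φ_A(C) = (t-1)(∑_{i=1}^{t-1} a_i⁻¹)⁻¹` if `a_1 > 0`, else `0`. -/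
def PhiA {t : ℕ} (C : Matrix (Fin t) (Fin t) ℝ) : ℝ :=
  if ∀ i : Fin t, (i : ℕ) ≠ 0 → 0 < sortedEigs C i then
    ((t : ℝ) - 1) *
      (∑ i ∈ Finset.univ.filter fun i : Fin t => (i : ℕ) ≠ 0, (sortedEigs C i)⁻¹)⁻¹
  else 0

/-- `Φ_T(C) = tr(C)/(t-1)`. -/
def PhiT {t : ℕ} (C : Matrix (Fin t) (Fin t) ℝ) : ℝ := C.trace / ((t : ℝ) - 1)

/-- The criterion value `∫ Φ(C_{d,τ0,λ0}) g(dτ0)`. -/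
def PhiCrit {p t : ℕ} (n : ℕ) (S : Matrix (Fin p) (Fin p) ℝ)
    (Phi : Matrix (Fin t) (Fin t) ℝ → ℝ) (g : Measure (Fin t → ℝ)) (l0 : ℝ)
    (w : TrtSeq p t → ℝ) : ℝ :=
  ∫ τ0, Phi (CInfo n S w τ0 l0) ∂g

/-- Competing designs for a `Φ`-criterion. -/
def PhiAdmissible {p t : ℕ} (n : ℕ) (S : Matrix (Fin p) (Fin p) ℝ)
    (Phi : Matrix (Fin t) (Fin t) ℝ → ℝ) (g : Measure (Fin t → ℝ)) (l0 : ℝ)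
    (w : TrtSeq p t → ℝ) : Prop :=
  IsDesign w ∧ (∀ᵐ τ0 ∂g, 0 < τ0 ⬝ᵥ (CD n S w 1 1 *ᵥ τ0)) ∧
    Integrable (fun τ0 => Phi (CInfo n S w τ0 l0)) g

/-- `d` is `Φ_{g,λ0}`-optimal. -/
def PhiOptimal {p t : ℕ} (n : ℕ) (S : Matrix (Fin p) (Fin p) ℝ)
    (Phi : Matrix (Fin t) (Fin t) ℝ → ℝ) (g : Measure (Fin t → ℝ)) (l0 : ℝ)
    (w : TrtSeq p t → ℝ) : Prop :=
  ∀ w' : TrtSeq p t → ℝ, PhiAdmissible n S Phi g l0 w' →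
    PhiCrit n S Phi g l0 w' ≤ PhiCrit n S Phi g l0 w

/-- `H_1(s) = F_s`, `H_2(s) = T_s + λ0 F_s` (for estimating `λ`). -/
def Hmat {p t : ℕ} (l0 : ℝ) (i : Fin 2) (s : TrtSeq p t) : Matrix (Fin p) (Fin t) ℝ :=
  if i = 0 then Fmat s else Tmat s + l0 • Fmat s

/-- `Â_{sij} = B_t H_i(s)' B̃ H_j(s) B_t`. -/
def Ahat {p t : ℕ} (S : Matrix (Fin p) (Fin p) ℝ) (l0 : ℝ) (s : TrtSeq p t) (i j : Fin 2) :
    Matrix (Fin t) (Fin t) ℝ :=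
  Bmat t * (Hmat l0 i s)ᵀ * Btil S * Hmat l0 j s * Bmat t

/-- `h_{sij} = tr Â_{sij}`. -/
def hseq {p t : ℕ} (S : Matrix (Fin p) (Fin p) ℝ) (l0 : ℝ) (s : TrtSeq p t) (i j : Fin 2) : ℝ :=
  (Ahat S l0 s i j).trace

/-- `Â_{dij} = n ∑_s p_s Â_{sij}`. -/
def AhatD {p t : ℕ} (n : ℕ) (S : Matrix (Fin p) (Fin p) ℝ) (l0 : ℝ) (w : TrtSeq p t → ℝ)
    (i j : Fin 2) : Matrix (Fin t) (Fin t) ℝ :=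
  (n : ℝ) • ∑ s : TrtSeq p t, w s • Ahat S l0 s i j

/-- `A_{dij} = Â_{dij} - n (∑_s p_s H_i(s) B_t)' B̃ (∑_s p_s H_j(s) B_t)`. -/
def AD {p t : ℕ} (n : ℕ) (S : Matrix (Fin p) (Fin p) ℝ) (l0 : ℝ) (w : TrtSeq p t → ℝ)
    (i j : Fin 2) : Matrix (Fin t) (Fin t) ℝ :=
  AhatD n S l0 w i j -
    (n : ℝ) • ((∑ s : TrtSeq p t, w s • (Hmat l0 i s * Bmat t))ᵀ * Btil S *
      (∑ s : TrtSeq p t, w s • (Hmat l0 j s * Bmat t)))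

/-- `G` is a generalized inverse of `A`. -/
def IsGInv {t : ℕ} (A G : Matrix (Fin t) (Fin t) ℝ) : Prop := A * G * A = A

/-- `A_d(G) = A_{d11} - A_{d12} G A_{d21}` with `A_{d21} = A_{d12}'`. -/
def ADfun {p t : ℕ} (n : ℕ) (S : Matrix (Fin p) (Fin p) ℝ) (l0 : ℝ) (w : TrtSeq p t → ℝ)
    (G : Matrix (Fin t) (Fin t) ℝ) : Matrix (Fin t) (Fin t) ℝ :=
  AD n S l0 w 0 0 - AD n S l0 w 0 1 * G * (AD n S l0 w 0 1)ᵀ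

/-- `r_s(x) = h_{s11} + 2 h_{s12} x + h_{s22} x²`. -/
def rSeq {p t : ℕ} (S : Matrix (Fin p) (Fin p) ℝ) (l0 : ℝ) (s : TrtSeq p t) (x : ℝ) : ℝ :=
  hseq S l0 s 0 0 + 2 * hseq S l0 s 0 1 * x + hseq S l0 s 1 1 * x ^ 2

/-- `r(x) = max_s r_s(x)`. -/
def rMax (p t : ℕ) (S : Matrix (Fin p) (Fin p) ℝ) (l0 : ℝ) (x : ℝ) : ℝ :=
  sSup (Set.range fun s : TrtSeq p t => rSeq S l0 s x)

/-- `y_0 = inf_x r(x)`. -/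
def yZero (p t : ℕ) (S : Matrix (Fin p) (Fin p) ℝ) (l0 : ℝ) : ℝ := ⨅ x : ℝ, rMax p t S l0 x

set_option linter.unusedSimpArgs false

/-! ### Linear algebra helpers -/

lemma Bmat_transpose (t : ℕ) : (Bmat t)ᵀ = Bmat t := by
  ext i j
  simp [Bmat, Jmat, Matrix.one_apply, eq_comm]

lemma Bmat_ones (t : ℕ) (ht : 3 ≤ t) : Bmat t *ᵥ (fun _ => (1 : ℝ)) = 0 := by
  have h0 : (t : ℝ) ≠ 0 := by positivity
  ext i
  simp [Bmat, Jmat, Matrix.sub_mulVec, Matrix.smul_mulVec, Matrix.mulVec, dotProduct, h0,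
    Matrix.one_apply]

lemma Bmat_mulVec (t : ℕ) (v : Fin t → ℝ) (hv : ∑ i, v i = 0) : Bmat t *ᵥ v = v := by
  ext i
  simp [sub_mul, Finset.sum_sub_distrib, ← Finset.mul_sum, Bmat, Jmat, Matrix.sub_mulVec, Matrix.smul_mulVec, Matrix.mulVec, dotProduct, hv,
    Matrix.one_apply]

lemma Bmat_trace (t : ℕ) (ht : 3 ≤ t) : (Bmat t).trace = (t : ℝ) - 1 := by
  have h0 : (t : ℝ) ≠ 0 := by positivity
  simp [Bmat, Jmat, Matrix.trace, Matrix.one_apply, h0]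

lemma mul_Bmat_zero {m t : ℕ} (ht : 3 ≤ t) (A : Matrix (Fin m) (Fin t) ℝ)
    (h : ∀ k a b, A k a = A k b) : A * Bmat t = 0 := by
  have h0 : (t : ℝ) ≠ 0 := by positivity
  ext k a
  have : ∀ b, A k b = A k a := fun b => h k b a
  simp [Bmat, Jmat, Matrix.mul_apply, this, h0, ← Finset.mul_sum, Finset.sum_sub_distrib, Matrix.one_apply]

lemma compl_symm_of_invariant {t : ℕ} (ht : 3 ≤ t) (A : Matrix (Fin t) (Fin t) ℝ)
    (hinv : ∀ (σ : Equiv.Perm (Fin t)) a b, A (σ a) (σ b) = A a b)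
    (hrow : ∀ a, ∑ b, A a b = 0) : A = (A.trace / ((t : ℝ) - 1)) • Bmat t := by
  have h3 : (3 : ℝ) ≤ t := by exact_mod_cast ht
  have h0 : (t : ℝ) ≠ 0 := by positivity
  have h1 : (t : ℝ) - 1 ≠ 0 := by linarith
  have hdiag : ∀ a b, A a a = A b b := by
    intro a b
    have := hinv (Equiv.swap a b) a a
    simpa using this.symm
  have hoff : ∀ a b c, a ≠ b → a ≠ c → A a b = A a c := by
    intro a b c hb hc
    have := hinv (Equiv.swap b c) a b
    rw [Equiv.swap_apply_of_ne_of_ne hb hc] at this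
    simpa using this.symm
  have htr : ∀ a, A.trace = t * A a a := by
    intro a
    have : ∀ b, A b b = A a a := fun b => hdiag b a
    simp [Matrix.trace, this]
  have hoff2 : ∀ a b, a ≠ b → A a b = - A a a / ((t : ℝ) - 1) := by
    intro a b hab
    have h := hrow a
    rw [← Finset.add_sum_erase _ _ (Finset.mem_univ a)] at h
    have h2 : ∑ c ∈ Finset.univ.erase a, A a c = ((t : ℝ) - 1) * A a b := by
      rw [Finset.sum_congr rfl (g := fun _ => A a b)
        (fun c hc => hoff a c b (Finset.ne_of_mem_erase hc).symm hab)]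
      rw [Finset.sum_const, Finset.card_erase_of_mem (Finset.mem_univ a)]
      simp only [Finset.card_univ, Fintype.card_fin, nsmul_eq_mul]
      rw [Nat.cast_sub (by omega)]
      simp
    rw [h2] at h
    field_simp
    linarith
  ext a b
  by_cases hab : a = b
  · subst hab
    rw [htr a]
    simp [Bmat, Jmat]
    field_simp
  · rw [hoff2 a b hab, htr a]
    simp [Bmat, Jmat, Matrix.one_apply, hab]
    field_simp

/-- Spectral data of a symmetric matrix, sorted. -/
lemma spectral {t : ℕ} (C : Matrix (Fin t) (Fin t) ℝ) (hC : C.IsHermitian) :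
    ∃ v : Fin t → Fin t → ℝ, Monotone (sortedEigs C) ∧
      (∀ i, C *ᵥ v i = sortedEigs C i • v i) ∧
      (∀ i j, v i ⬝ᵥ v j = if i = j then 1 else 0) ∧
      (∀ M : Matrix (Fin t) (Fin t) ℝ, M.trace = ∑ i, v i ⬝ᵥ (M *ᵥ v i)) ∧
      (∀ x : Fin t → ℝ, x = ∑ i, (v i ⬝ᵥ x) • v i) := by
  set σ := Tuple.sort hC.eigenvalues with hσ
  have hs : sortedEigs C = fun i => hC.eigenvalues (σ i) := by
    unfold sortedEigs
    rw [dif_pos hC]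
  let v : Fin t → Fin t → ℝ := fun i => (hC.eigenvectorBasis (σ i)).ofLp
  have horth : ∀ i j, v i ⬝ᵥ v j = if i = j then 1 else 0 := by
    intro i j
    have h := orthonormal_iff_ite.mp hC.eigenvectorBasis.orthonormal (σ j) (σ i)
    rw [EuclideanSpace.inner_eq_star_dotProduct] at h
    simp only [star_trivial] at h
    rw [show v i ⬝ᵥ v j = _ from h]
    simp [eq_comm]
  have hV : (Matrix.of v) * (Matrix.of v)ᵀ = 1 := by
    ext i j
    rw [Matrix.one_apply, ← horth i j]
    rfl
  have hV' : (Matrix.of v)ᵀ * (Matrix.of v) = 1 := mul_eq_one_comm.mp hV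
  refine ⟨v, ?_, ?_, horth, ?_, ?_⟩
  · rw [hs]; exact Tuple.monotone_sort hC.eigenvalues
  · intro i
    rw [hs]
    exact hC.mulVec_eigenvectorBasis (σ i)
  · intro M
    have : M.trace = ((Matrix.of v) * (M * (Matrix.of v)ᵀ)).trace := by
      rw [Matrix.trace_mul_comm, Matrix.mul_assoc, hV', Matrix.mul_one]
    rw [this]
    rfl
  · intro x
    have : ((Matrix.of v)ᵀ * (Matrix.of v)) *ᵥ x = x := by rw [hV', Matrix.one_mulVec]
    rw [← Matrix.mulVec_mulVec] at this
    nth_rewrite 1 [← this]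
    ext k
    simp [Matrix.mulVec, dotProduct, Finset.sum_apply, mul_comm]

lemma herm_transpose {t : ℕ} {C : Matrix (Fin t) (Fin t) ℝ} (hC : C.IsHermitian) : Cᵀ = C := by
  have := hC.eq
  rwa [Matrix.conjTranspose_eq_transpose_of_trivial] at this

lemma herm_dot {t : ℕ} {C : Matrix (Fin t) (Fin t) ℝ} (hC : C.IsHermitian) (x y : Fin t → ℝ) :
    x ⬝ᵥ (C *ᵥ y) = (C *ᵥ x) ⬝ᵥ y := by
  have hT : Cᵀ = C := herm_transpose hC
  rw [Matrix.dotProduct_mulVec, ← Matrix.mulVec_transpose, hT]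

lemma sum_filter_ne_zero {t : ℕ} (i0 : Fin t) (hi0 : (i0 : ℕ) = 0) (f : Fin t → ℝ) :
    ∑ i ∈ Finset.univ.filter (fun i : Fin t => (i : ℕ) ≠ 0), f i = ∑ i, f i - f i0 := by
  have : Finset.univ.filter (fun i : Fin t => (i : ℕ) ≠ 0) = Finset.univ.erase i0 := by
    ext i
    simp [Fin.ext_iff, hi0]
  rw [this, ← Finset.add_sum_erase _ _ (Finset.mem_univ i0)]
  ring

lemma PhiA_le {t : ℕ} (ht : 3 ≤ t) (C : Matrix (Fin t) (Fin t) ℝ) (hC : C.IsHermitian)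
    (hC1 : C *ᵥ (fun _ => (1 : ℝ)) = 0) (u : Fin t → ℝ) (hu1 : ∑ i, u i = 0)
    (huu : u ⬝ᵥ u = 1) (α β : ℝ) :
    PhiA C = 0 ∨ PhiA C * (α + ((t : ℝ) - 2) * β) ^ 2 ≤
      ((t : ℝ) - 1) * (α ^ 2 * (u ⬝ᵥ (C *ᵥ u)) + β ^ 2 * (C.trace - u ⬝ᵥ (C *ᵥ u))) := by
  have h3 : (3 : ℝ) ≤ t := by exact_mod_cast ht
  unfold PhiA
  split_ifs with hpos
  swap
  · left; rfl
  right
  obtain ⟨v, hmono, hev, horth, htr, hexp⟩ := spectral C hC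
  set a := sortedEigs C with ha
  let i0 : Fin t := ⟨0, by omega⟩
  have hi0 : (i0 : ℕ) = 0 := rfl
  have hv1 : ∀ i, a i * (v i ⬝ᵥ (fun _ => (1 : ℝ))) = 0 := by
    intro i
    have := herm_dot hC (v i) (fun _ => (1 : ℝ))
    rw [hC1, hev, smul_dotProduct] at this
    simpa using this.symm
  have hv1' : ∀ i, i ≠ i0 → v i ⬝ᵥ (fun _ => (1 : ℝ)) = 0 := by
    intro i hi
    have hp : 0 < a i := hpos i (by rw [Ne, Fin.ext_iff] at hi; exact hi)
    exact (mul_eq_zero.mp (hv1 i)).resolve_left hp.ne'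
  have hone : (fun _ => (1 : ℝ)) = (v i0 ⬝ᵥ (fun _ => (1 : ℝ))) • v i0 := by
    have h := hexp (fun _ => (1 : ℝ))
    rw [Finset.sum_eq_single i0] at h
    · exact h
    · intro i _ hi; rw [hv1' i hi, zero_smul]
    · simp
  have hne : v i0 ⬝ᵥ (fun _ => (1 : ℝ)) ≠ 0 := by
    intro h
    rw [h, zero_smul] at hone
    have := congrFun hone i0
    simp at this
  have ha0 : a i0 = 0 := (mul_eq_zero.mp (hv1 i0)).resolve_right hne
  have hu0 : v i0 ⬝ᵥ u = 0 := by
    have h : (fun _ => (1 : ℝ)) ⬝ᵥ u = 0 := by simpa [dotProduct] using hu1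
    rw [hone, smul_dotProduct, smul_eq_mul] at h
    exact (mul_eq_zero.mp h).resolve_left hne
  have hsumy : ∑ i, (v i ⬝ᵥ u) ^ 2 = 1 := by
    have h := htr (vecMulVec u u)
    rw [Matrix.trace_vecMulVec, huu] at h
    rw [h]
    refine Finset.sum_congr rfl fun i _ => ?_
    rw [Matrix.vecMulVec_mulVec, dotProduct_smul, dotProduct_comm u]
    simp [sq]
  have hsumay : ∑ i, a i * (v i ⬝ᵥ u) ^ 2 = u ⬝ᵥ (C *ᵥ u) := by
    have h := htr (vecMulVec u u * C)
    rw [Matrix.vecMulVec_mul, Matrix.trace_vecMulVec, ← Matrix.mulVec_transpose,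
      herm_transpose hC] at h
    rw [h]
    refine Finset.sum_congr rfl fun i _ => ?_
    rw [Matrix.vecMulVec_mulVec, dotProduct_smul, ← herm_dot hC, hev, dotProduct_smul,
      dotProduct_comm u]
    simp
    ring
  have htrC : C.trace = ∑ i, a i := by
    rw [htr C]
    refine Finset.sum_congr rfl fun i _ => ?_
    rw [hev, dotProduct_smul, horth]
    simp
  have hy1 : ∀ i, (v i ⬝ᵥ u) ^ 2 ≤ 1 := by
    intro i
    rw [← hsumy]
    exact Finset.single_le_sum (f := fun i => (v i ⬝ᵥ u) ^ 2) (fun j _ => sq_nonneg _)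
      (Finset.mem_univ i)
  set F := Finset.univ.filter (fun i : Fin t => (i : ℕ) ≠ 0) with hF
  have hFpos : ∀ i ∈ F, 0 < a i := fun i hi => hpos i (Finset.mem_filter.mp hi).2
  have hFne : F.Nonempty := ⟨⟨1, by omega⟩, by simp [hF]⟩
  have hH : 0 < ∑ i ∈ F, (a i)⁻¹ :=
    Finset.sum_pos (fun i hi => inv_pos.mpr (hFpos i hi)) hFne
  have hK : ∑ i ∈ F, (β * (1 - (v i ⬝ᵥ u) ^ 2) + α * (v i ⬝ᵥ u) ^ 2) =
      α + ((t : ℝ) - 2) * β := by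
    rw [hF, sum_filter_ne_zero i0 hi0, Finset.sum_add_distrib, ← Finset.mul_sum,
      ← Finset.mul_sum, Finset.sum_sub_distrib, hsumy, hu0]
    simp
    ring
  have hCS : (α + ((t : ℝ) - 2) * β) ^ 2 ≤ (∑ i ∈ F, (a i)⁻¹) *
      ∑ i ∈ F, a i * (β * (1 - (v i ⬝ᵥ u) ^ 2) + α * (v i ⬝ᵥ u) ^ 2) ^ 2 := by
    rw [← hK]
    refine Finset.sum_sq_le_sum_mul_sum_of_sq_le_mul _ (fun i hi => (inv_pos.mpr (hFpos i hi)).le)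
      (fun i hi => mul_nonneg (hFpos i hi).le (sq_nonneg _)) (fun i hi => ?_)
    have := (hFpos i hi).ne'
    apply le_of_eq
    field_simp
  have hle : ∑ i ∈ F, a i * (β * (1 - (v i ⬝ᵥ u) ^ 2) + α * (v i ⬝ᵥ u) ^ 2) ^ 2 ≤
      ∑ i ∈ F, a i * (β ^ 2 * (1 - (v i ⬝ᵥ u) ^ 2) + α ^ 2 * (v i ⬝ᵥ u) ^ 2) := by
    refine Finset.sum_le_sum fun i hi => mul_le_mul_of_nonneg_left ?_ (hFpos i hi).le
    have h1 := hy1 i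
    have h0 := sq_nonneg (v i ⬝ᵥ u)
    set y := (v i ⬝ᵥ u) ^ 2
    nlinarith [mul_nonneg (mul_nonneg h0 (sub_nonneg.mpr h1)) (sq_nonneg (α - β))]
  have heq : ∑ i ∈ F, a i * (β ^ 2 * (1 - (v i ⬝ᵥ u) ^ 2) + α ^ 2 * (v i ⬝ᵥ u) ^ 2) =
      α ^ 2 * (u ⬝ᵥ (C *ᵥ u)) + β ^ 2 * (C.trace - u ⬝ᵥ (C *ᵥ u)) := by
    rw [hF, sum_filter_ne_zero i0 hi0, ha0, htrC, ← hsumay, ← Finset.sum_sub_distrib,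
      Finset.mul_sum, Finset.mul_sum, ← Finset.sum_add_distrib, zero_mul, sub_zero]
    refine Finset.sum_congr rfl fun i _ => ?_
    ring
  rw [heq] at hle
  rw [mul_assoc]
  refine mul_le_mul_of_nonneg_left ?_ (by linarith)
  rw [inv_mul_le_iff₀ hH]
  exact hCS.trans (mul_le_mul_of_nonneg_left hle hH.le)

lemma PhiA_eq {t : ℕ} (ht : 3 ≤ t) (C D : Matrix (Fin t) (Fin t) ℝ) (hC : C.PosSemidef)
    (hC1 : C *ᵥ (fun _ => (1 : ℝ)) = 0) (hD1 : D *ᵥ (fun _ => (1 : ℝ)) = 0)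
    (hDC : D * C = Bmat t) : PhiA C = ((t : ℝ) - 1) * (D.trace)⁻¹ := by
  have h3 : (3 : ℝ) ≤ t := by exact_mod_cast ht
  have hH := hC.isHermitian
  obtain ⟨v, hmono, hev, horth, htr, hexp⟩ := spectral C hH
  set a := sortedEigs C with ha
  let i0 : Fin t := ⟨0, by omega⟩
  have hi0 : (i0 : ℕ) = 0 := rfl
  have hnn : ∀ i, 0 ≤ a i := by
    intro i
    have h := hC.dotProduct_mulVec_nonneg (v i)
    rw [hev, dotProduct_smul] at h
    simpa [horth] using h
  have hB : ∀ i, Bmat t *ᵥ v i = a i • D *ᵥ v i := by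
    intro i
    rw [← hDC, ← Matrix.mulVec_mulVec, hev, Matrix.mulVec_smul]
  have hker : ∀ i, a i = 0 → ∃ m : ℝ, v i = fun _ => m := by
    intro i hi
    have h := hB i
    rw [hi, zero_smul] at h
    refine ⟨(t : ℝ)⁻¹ * ∑ k, v i k, ?_⟩
    ext k
    have h2 := congrFun h k
    simp only [Bmat, Matrix.sub_mulVec, Matrix.one_mulVec, Matrix.smul_mulVec] at h2
    simp [Jmat, Matrix.mulVec, dotProduct] at h2
    linarith
  have hpos : ∀ i : Fin t, (i : ℕ) ≠ 0 → 0 < a i := by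
    intro i hi
    by_contra hcon
    have hz : a i = 0 := le_antisymm (not_lt.mp hcon) (hnn i)
    have hz0 : a i0 = 0 := by
      refine le_antisymm ?_ (hnn i0)
      rw [← hz]
      exact hmono (by simp [Fin.le_def, hi0])
    obtain ⟨m, hm⟩ := hker i hz
    obtain ⟨m', hm'⟩ := hker i0 hz0
    have e1 := horth i i
    have e2 := horth i0 i0
    have e3 := horth i i0
    have hne : i ≠ i0 := by rw [Ne, Fin.ext_iff]; exact hi
    rw [if_neg hne] at e3
    rw [hm] at e1 e3
    rw [hm'] at e2 e3
    simp [dotProduct] at e1 e2 e3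
    rcases e3 with h | h | h
    · omega
    · simp [h] at e1
    · simp [h] at e2
  have hv1 : ∀ i, a i * (v i ⬝ᵥ (fun _ => (1 : ℝ))) = 0 := by
    intro i
    have := herm_dot hH (v i) (fun _ => (1 : ℝ))
    rw [hC1, hev, smul_dotProduct] at this
    simpa using this.symm
  have hv1' : ∀ i, i ≠ i0 → v i ⬝ᵥ (fun _ => (1 : ℝ)) = 0 := by
    intro i hi
    have hp : 0 < a i := hpos i (by rw [Ne, Fin.ext_iff] at hi; exact hi)
    exact (mul_eq_zero.mp (hv1 i)).resolve_left hp.ne'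
  have hone : (fun _ => (1 : ℝ)) = (v i0 ⬝ᵥ (fun _ => (1 : ℝ))) • v i0 := by
    have h := hexp (fun _ => (1 : ℝ))
    rw [Finset.sum_eq_single i0] at h
    · exact h
    · intro i _ hi; rw [hv1' i hi, zero_smul]
    · simp
  have hne : v i0 ⬝ᵥ (fun _ => (1 : ℝ)) ≠ 0 := by
    intro h
    rw [h, zero_smul] at hone
    have := congrFun hone i0
    simp at this
  have hD0 : D *ᵥ v i0 = 0 := by
    rw [hone, Matrix.mulVec_smul] at hD1
    exact (smul_eq_zero.mp hD1).resolve_left hne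
  have hDtr : D.trace =
      ∑ i ∈ Finset.univ.filter (fun i : Fin t => (i : ℕ) ≠ 0), (a i)⁻¹ := by
    have e : D.trace = ∑ i ∈ Finset.univ.filter (fun i : Fin t => (i : ℕ) ≠ 0),
        v i ⬝ᵥ (D *ᵥ v i) := by
      rw [sum_filter_ne_zero i0 hi0, ← htr D, hD0]
      simp
    rw [e]
    refine Finset.sum_congr rfl fun i hi => ?_
    have hi' := (Finset.mem_filter.mp hi).2
    have hp := hpos i hi'
    have hne' : i ≠ i0 := by rw [Ne, Fin.ext_iff]; exact hi'
    have hb := hB i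
    rw [Bmat_mulVec t (v i) (by simpa [dotProduct] using hv1' i hne')] at hb
    have : v i ⬝ᵥ v i = a i * (v i ⬝ᵥ (D *ᵥ v i)) := by
      nth_rewrite 2 [hb]
      rw [dotProduct_smul, smul_eq_mul]
    rw [horth, if_pos rfl] at this
    field_simp
    linarith
  unfold PhiA
  rw [if_pos hpos, hDtr]

/-! ### Structure of the information matrices -/

lemma Btil_posSemidef {p : ℕ} (hp : 2 ≤ p) (S : Matrix (Fin p) (Fin p) ℝ) (hS : S.PosDef) :
    (Btil S).PosSemidef := by
  have hI : (S⁻¹).PosDef := hS.inv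
  have hT : (S⁻¹)ᵀ = S⁻¹ := herm_transpose hI.isHermitian
  set k : ℝ := ((fun _ => (1 : ℝ)) : Fin p → ℝ) ⬝ᵥ (S⁻¹ *ᵥ fun _ => (1 : ℝ)) with hk
  have hkpos : 0 < k := by
    have h := hI.dotProduct_mulVec_pos (x := fun _ => (1 : ℝ)) (by
      intro h
      have := congrFun h ⟨0, by omega⟩
      simp at this)
    simpa using h
  have hJ : Jmat p = vecMulVec (fun _ => (1 : ℝ)) (fun _ => (1 : ℝ)) := by
    ext i j; simp [Jmat, vecMulVec]
  have hJT : (Jmat p)ᵀ = Jmat p := by ext i j; simp [Jmat]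
  have hJJ : Jmat p * S⁻¹ * Jmat p = k • Jmat p := by
    rw [hJ, Matrix.mul_assoc, Matrix.mul_vecMulVec, Matrix.vecMulVec_mul_vecMulVec,
      Matrix.vecMulVec_smul]
  have hEq : Btil S = (1 - k⁻¹ • (Jmat p * S⁻¹))ᴴ * S⁻¹ * (1 - k⁻¹ • (Jmat p * S⁻¹)) := by
    rw [Matrix.conjTranspose_eq_transpose_of_trivial, Matrix.transpose_sub, Matrix.transpose_one,
      Matrix.transpose_smul, Matrix.transpose_mul, hT, hJT]
    simp only [Matrix.sub_mul, Matrix.mul_sub, Matrix.one_mul, Matrix.mul_one, Matrix.smul_mul,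
      Matrix.mul_smul]
    have e : S⁻¹ * Jmat p * S⁻¹ * (Jmat p * S⁻¹) = k • (S⁻¹ * Jmat p * S⁻¹) := by
      calc S⁻¹ * Jmat p * S⁻¹ * (Jmat p * S⁻¹) = S⁻¹ * (Jmat p * S⁻¹ * Jmat p) * S⁻¹ := by
            simp only [Matrix.mul_assoc]
        _ = _ := by rw [hJJ]; simp
    rw [e, ← Matrix.mul_assoc, smul_smul, inv_mul_cancel₀ hkpos.ne', one_smul, sub_self, smul_zero, sub_zero]
    rfl
  rw [hEq]
  exact hI.posSemidef.conjTranspose_mul_mul_same _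

/-- `∑_s p_s G_i(s) B_t`. -/
def gsum {p t : ℕ} (w : TrtSeq p t → ℝ) (i : Fin 2) : Matrix (Fin p) (Fin t) ℝ :=
  ∑ s : TrtSeq p t, w s • (Gmat i s * Bmat t)

lemma Chat_eq {p t : ℕ} (S : Matrix (Fin p) (Fin p) ℝ) (s : TrtSeq p t) (i j : Fin 2) :
    Chat S s i j = (Gmat i s * Bmat t)ᵀ * Btil S * (Gmat j s * Bmat t) := by
  rw [Matrix.transpose_mul, Bmat_transpose]
  simp only [Chat, Matrix.mul_assoc]

lemma Chat_transpose {p t : ℕ} (hp : 2 ≤ p) (S : Matrix (Fin p) (Fin p) ℝ) (hS : S.PosDef)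
    (s : TrtSeq p t) (i j : Fin 2) : (Chat S s i j)ᵀ = Chat S s j i := by
  have hT := herm_transpose (Btil_posSemidef hp S hS).isHermitian
  rw [Chat_eq, Chat_eq]
  simp only [Matrix.transpose_mul, Matrix.transpose_transpose, hT, Matrix.mul_assoc]

lemma Chat_ones {p t : ℕ} (ht : 3 ≤ t) (S : Matrix (Fin p) (Fin p) ℝ)
    (s : TrtSeq p t) (i j : Fin 2) : Chat S s i j *ᵥ (fun _ => (1 : ℝ)) = 0 := by
  rw [Chat, ← Matrix.mulVec_mulVec, Bmat_ones t ht, Matrix.mulVec_zero]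

lemma ChatD_transpose {p t : ℕ} (n : ℕ) (hp : 2 ≤ p) (S : Matrix (Fin p) (Fin p) ℝ)
    (hS : S.PosDef) (w : TrtSeq p t → ℝ) (i j : Fin 2) :
    (ChatD n S w i j)ᵀ = ChatD n S w j i := by
  simp only [ChatD, Matrix.transpose_smul, Matrix.transpose_sum, Chat_transpose hp S hS]

lemma ChatD_ones {p t : ℕ} (n : ℕ) (ht : 3 ≤ t) (S : Matrix (Fin p) (Fin p) ℝ)
    (w : TrtSeq p t → ℝ) (i j : Fin 2) : ChatD n S w i j *ᵥ (fun _ => (1 : ℝ)) = 0 := by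
  simp only [ChatD, Matrix.smul_mulVec, Matrix.sum_mulVec, Chat_ones ht, smul_zero,
    Finset.sum_const_zero]

lemma gsum_ones {p t : ℕ} (ht : 3 ≤ t) (w : TrtSeq p t → ℝ) (i : Fin 2) :
    gsum w i *ᵥ (fun _ => (1 : ℝ)) = 0 := by
  simp only [gsum, Matrix.smul_mulVec, Matrix.sum_mulVec, ← Matrix.mulVec_mulVec, Bmat_ones t ht,
    Matrix.mulVec_zero, smul_zero, Finset.sum_const_zero]

lemma CD_eq {p t : ℕ} (n : ℕ) (S : Matrix (Fin p) (Fin p) ℝ) (w : TrtSeq p t → ℝ)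
    (i j : Fin 2) :
    CD n S w i j = ChatD n S w i j - (n : ℝ) • ((gsum w i)ᵀ * Btil S * gsum w j) := rfl

lemma CD_transpose {p t : ℕ} (n : ℕ) (hp : 2 ≤ p) (S : Matrix (Fin p) (Fin p) ℝ)
    (hS : S.PosDef) (w : TrtSeq p t → ℝ) (i j : Fin 2) :
    (CD n S w i j)ᵀ = CD n S w j i := by
  have hT := herm_transpose (Btil_posSemidef hp S hS).isHermitian
  rw [CD_eq, CD_eq]
  simp only [Matrix.transpose_sub, Matrix.transpose_smul, ChatD_transpose n hp S hS,
    Matrix.transpose_mul, Matrix.transpose_transpose, hT, Matrix.mul_assoc]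

lemma CD_ones {p t : ℕ} (n : ℕ) (ht : 3 ≤ t) (S : Matrix (Fin p) (Fin p) ℝ)
    (w : TrtSeq p t → ℝ) (i j : Fin 2) : CD n S w i j *ᵥ (fun _ => (1 : ℝ)) = 0 := by
  simp only [CD_eq, Matrix.sub_mulVec, ChatD_ones n ht, Matrix.smul_mulVec,
    ← Matrix.mulVec_mulVec, gsum_ones ht, Matrix.mulVec_zero, smul_zero, sub_zero]

/-- Matrix polynomial `Ĉ_{d11} + x(Ĉ_{d12}+Ĉ_{d21}) + x² Ĉ_{d22}`. -/
def Mhat {p t : ℕ} (n : ℕ) (S : Matrix (Fin p) (Fin p) ℝ) (w : TrtSeq p t → ℝ) (x : ℝ) :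
    Matrix (Fin t) (Fin t) ℝ :=
  ChatD n S w 0 0 + x • (ChatD n S w 0 1 + ChatD n S w 1 0) + (x ^ 2) • ChatD n S w 1 1

/-- Matrix polynomial `C_{d11} + x(C_{d12}+C_{d21}) + x² C_{d22}`. -/
def Mc {p t : ℕ} (n : ℕ) (S : Matrix (Fin p) (Fin p) ℝ) (w : TrtSeq p t → ℝ) (x : ℝ) :
    Matrix (Fin t) (Fin t) ℝ :=
  CD n S w 0 0 + x • (CD n S w 0 1 + CD n S w 1 0) + (x ^ 2) • CD n S w 1 1

lemma quad_expand {p t : ℕ} (A B : Matrix (Fin p) (Fin t) ℝ) (Q : Matrix (Fin p) (Fin p) ℝ)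
    (x : ℝ) : (A + x • B)ᵀ * Q * (A + x • B) =
      Aᵀ * Q * A + x • (Aᵀ * Q * B + Bᵀ * Q * A) + (x ^ 2) • (Bᵀ * Q * B) := by
  simp only [Matrix.transpose_add, Matrix.transpose_smul, Matrix.add_mul, Matrix.mul_add,
    Matrix.smul_mul, Matrix.mul_smul, smul_add, smul_smul, sq]
  abel

lemma Mhat_sub_Mc {p t : ℕ} (n : ℕ) (S : Matrix (Fin p) (Fin p) ℝ) (w : TrtSeq p t → ℝ)
    (x : ℝ) : Mhat n S w x - Mc n S w x =
      (n : ℝ) • ((gsum w 0 + x • gsum w 1)ᵀ * Btil S * (gsum w 0 + x • gsum w 1)) := by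
  rw [quad_expand]
  simp only [Mhat, Mc, CD_eq]
  module

lemma Mhat_sub_Mc_psd {p t : ℕ} (n : ℕ) (hp : 2 ≤ p) (S : Matrix (Fin p) (Fin p) ℝ)
    (hS : S.PosDef) (w : TrtSeq p t → ℝ) (x : ℝ) :
    (Mhat n S w x - Mc n S w x).PosSemidef := by
  rw [Mhat_sub_Mc, ← Matrix.conjTranspose_eq_transpose_of_trivial]
  exact ((Btil_posSemidef hp S hS).conjTranspose_mul_mul_same _).smul (Nat.cast_nonneg n)

lemma Mhat_eq {p t : ℕ} (n : ℕ) (S : Matrix (Fin p) (Fin p) ℝ) (w : TrtSeq p t → ℝ) (x : ℝ) :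
    Mhat n S w x = (n : ℝ) • ∑ s, w s • (Chat S s 0 0 + x • (Chat S s 0 1 + Chat S s 1 0) +
      (x ^ 2) • Chat S s 1 1) := by
  simp only [Mhat, ChatD]
  simp only [Finset.smul_sum, ← Finset.sum_add_distrib]
  refine Finset.sum_congr rfl fun s _ => ?_
  module

lemma Chat_psd {p t : ℕ} (hp : 2 ≤ p) (S : Matrix (Fin p) (Fin p) ℝ) (hS : S.PosDef)
    (s : TrtSeq p t) (x : ℝ) : (Chat S s 0 0 + x • (Chat S s 0 1 + Chat S s 1 0) +
      (x ^ 2) • Chat S s 1 1).PosSemidef := by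
  simp only [Chat_eq]
  rw [← quad_expand, ← Matrix.conjTranspose_eq_transpose_of_trivial]
  exact (Btil_posSemidef hp S hS).conjTranspose_mul_mul_same _

lemma Mhat_psd {p t : ℕ} (n : ℕ) (hp : 2 ≤ p) (S : Matrix (Fin p) (Fin p) ℝ)
    (hS : S.PosDef) (w : TrtSeq p t → ℝ) (hw : ∀ s, 0 ≤ w s) (x : ℝ) :
    (Mhat n S w x).PosSemidef := by
  rw [Mhat_eq]
  refine Matrix.PosSemidef.smul ?_ (Nat.cast_nonneg n)
  exact Matrix.posSemidef_sum _ fun s _ => (Chat_psd hp S hS s x).smul (hw s)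

lemma cseq_comm {p t : ℕ} (hp : 2 ≤ p) (S : Matrix (Fin p) (Fin p) ℝ) (hS : S.PosDef)
    (s : TrtSeq p t) : cseq S s 1 0 = cseq S s 0 1 := by
  rw [cseq, cseq, ← Chat_transpose hp S hS, Matrix.trace_transpose]

lemma qSeq_trace {p t : ℕ} (hp : 2 ≤ p) (S : Matrix (Fin p) (Fin p) ℝ) (hS : S.PosDef)
    (s : TrtSeq p t) (x : ℝ) : (Chat S s 0 0 + x • (Chat S s 0 1 + Chat S s 1 0) +
      (x ^ 2) • Chat S s 1 1).trace = qSeq S s x := by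
  simp only [Matrix.trace_add, Matrix.trace_smul, smul_eq_mul]
  change cseq S s 0 0 + x * (cseq S s 0 1 + cseq S s 1 0) + x ^ 2 * cseq S s 1 1 = _
  rw [cseq_comm hp S hS, qSeq]
  ring

lemma Mhat_trace {p t : ℕ} (n : ℕ) (hp : 2 ≤ p) (S : Matrix (Fin p) (Fin p) ℝ)
    (hS : S.PosDef) (w : TrtSeq p t → ℝ) (x : ℝ) : (Mhat n S w x).trace = n * qD S w x := by
  rw [Mhat_eq, Matrix.trace_smul, Matrix.trace_sum, qD, smul_eq_mul]
  congr 1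
  refine Finset.sum_congr rfl fun s _ => ?_
  rw [Matrix.trace_smul, qSeq_trace hp S hS, smul_eq_mul]

lemma Mhat_ones {p t : ℕ} (n : ℕ) (ht : 3 ≤ t) (S : Matrix (Fin p) (Fin p) ℝ)
    (w : TrtSeq p t → ℝ) (x : ℝ) : Mhat n S w x *ᵥ (fun _ => (1 : ℝ)) = 0 := by
  simp only [Mhat, Matrix.add_mulVec, Matrix.smul_mulVec, ChatD_ones n ht, smul_zero, add_zero]

lemma CInfo_eq {p t : ℕ} (n : ℕ) (hp : 2 ≤ p) (S : Matrix (Fin p) (Fin p) ℝ)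
    (hS : S.PosDef) (w : TrtSeq p t → ℝ) (τ : Fin t → ℝ) (l0 : ℝ) :
    CInfo n S w τ l0 = Mc n S w l0 - (τ ⬝ᵥ (CD n S w 1 1 *ᵥ τ))⁻¹ •
      vecMulVec ((CD n S w 0 1 + l0 • CD n S w 1 1) *ᵥ τ)
        ((CD n S w 0 1 + l0 • CD n S w 1 1) *ᵥ τ) := by
  rw [CInfo, Mc, Matrix.mul_vecMulVec, Matrix.vecMulVec_mul, ← Matrix.mulVec_transpose]
  simp only [Matrix.transpose_add, Matrix.transpose_smul, CD_transpose n hp S hS]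

lemma Mc_transpose {p t : ℕ} (n : ℕ) (hp : 2 ≤ p) (S : Matrix (Fin p) (Fin p) ℝ)
    (hS : S.PosDef) (w : TrtSeq p t → ℝ) (x : ℝ) : (Mc n S w x)ᵀ = Mc n S w x := by
  simp only [Mc, Matrix.transpose_add, Matrix.transpose_smul, CD_transpose n hp S hS]
  rw [add_comm (CD n S w 1 0)]

lemma vecMulVec_symm {t : ℕ} (v : Fin t → ℝ) : (vecMulVec v v)ᵀ = vecMulVec v v := by
  ext i j; simp [vecMulVec, mul_comm]

lemma vecMulVec_psd {t : ℕ} (v : Fin t → ℝ) : (vecMulVec v v).PosSemidef := by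
  have := Matrix.posSemidef_vecMulVec_self_star v
  simpa using this

lemma CInfo_herm {p t : ℕ} (n : ℕ) (hp : 2 ≤ p) (S : Matrix (Fin p) (Fin p) ℝ)
    (hS : S.PosDef) (w : TrtSeq p t → ℝ) (τ : Fin t → ℝ) (l0 : ℝ) :
    (CInfo n S w τ l0).IsHermitian := by
  rw [Matrix.IsHermitian, Matrix.conjTranspose_eq_transpose_of_trivial, CInfo_eq n hp S hS,
    Matrix.transpose_sub, Mc_transpose n hp S hS, Matrix.transpose_smul, vecMulVec_symm]

lemma CInfo_ones {p t : ℕ} (n : ℕ) (ht : 3 ≤ t) (S : Matrix (Fin p) (Fin p) ℝ)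
    (w : TrtSeq p t → ℝ) (τ : Fin t → ℝ) (l0 : ℝ) :
    CInfo n S w τ l0 *ᵥ (fun _ => (1 : ℝ)) = 0 := by
  simp only [CInfo, Matrix.sub_mulVec, Matrix.add_mulVec, Matrix.smul_mulVec, CD_ones n ht,
    ← Matrix.mulVec_mulVec, smul_zero, add_zero, Matrix.mulVec_zero, sub_zero]

lemma trace_sub_quad {t : ℕ} (N : Matrix (Fin t) (Fin t) ℝ) (hN : N.PosSemidef)
    (u : Fin t → ℝ) (hu : u ⬝ᵥ u = 1) : 0 ≤ N.trace - u ⬝ᵥ (N *ᵥ u) := by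
  have h := (hN.conjTranspose_mul_mul_same (1 - vecMulVec u u)).trace_nonneg
  rw [Matrix.conjTranspose_eq_transpose_of_trivial, Matrix.trace_mul_comm, ← Matrix.mul_assoc,
    Matrix.transpose_sub, vecMulVec_symm, Matrix.transpose_one] at h
  have e : (1 - vecMulVec u u) * (1 - vecMulVec u u) = 1 - vecMulVec u u := by
    simp [Matrix.sub_mul, Matrix.mul_sub, Matrix.vecMulVec_mul_vecMulVec, hu]
  rw [e, Matrix.sub_mul, Matrix.one_mul, Matrix.trace_sub, Matrix.vecMulVec_mul,
    Matrix.trace_vecMulVec, ← Matrix.mulVec_transpose, herm_transpose hN.isHermitian] at h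
  exact h

/-- The pointwise bound. -/
lemma PhiA_pointwise {p t n : ℕ} (hp : 2 ≤ p) (ht : 3 ≤ t) (S : Matrix (Fin p) (Fin p) ℝ)
    (hS : S.PosDef) (w : TrtSeq p t → ℝ) (hw : ∀ s, 0 ≤ w s) (τ : Fin t → ℝ) (l0 x : ℝ)
    (hτ1 : ∑ i, τ i = 0) (hτ0 : τ ≠ 0) (he : 0 < τ ⬝ᵥ (CD n S w 1 1 *ᵥ τ)) (α β : ℝ) :
    PhiA (CInfo n S w τ l0) * (α + ((t : ℝ) - 2) * β) ^ 2 ≤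
      ((t : ℝ) - 1) * (α ^ 2 * ((τ ⬝ᵥ (Mhat n S w x *ᵥ τ)) / (τ ⬝ᵥ τ)) +
        β ^ 2 * ((Mhat n S w l0).trace - (τ ⬝ᵥ (Mhat n S w l0 *ᵥ τ)) / (τ ⬝ᵥ τ))) := by
  have h3 : (3 : ℝ) ≤ t := by exact_mod_cast ht
  have hττ : 0 < τ ⬝ᵥ τ := by
    have h := dotProduct_star_self_pos_iff.mpr hτ0
    simpa using h
  set r := Real.sqrt (τ ⬝ᵥ τ) with hr
  have hrpos : 0 < r := Real.sqrt_pos.mpr hττ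
  have hrr : r * r = τ ⬝ᵥ τ := Real.mul_self_sqrt hττ.le
  set u : Fin t → ℝ := r⁻¹ • τ with hu
  have hquad : ∀ N : Matrix (Fin t) (Fin t) ℝ, u ⬝ᵥ (N *ᵥ u) = (τ ⬝ᵥ (N *ᵥ τ)) / (τ ⬝ᵥ τ) := by
    intro N
    rw [hu, Matrix.mulVec_smul, dotProduct_smul, smul_dotProduct, ← hrr, smul_eq_mul, smul_eq_mul]
    field_simp
  have huu : u ⬝ᵥ u = 1 := by
    rw [hu, dotProduct_smul, smul_dotProduct, ← hrr, smul_eq_mul, smul_eq_mul]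
    field_simp
  have hu1 : ∑ i, u i = 0 := by
    simp only [hu, Pi.smul_apply, ← Finset.smul_sum, hτ1, smul_zero]
  rw [← hquad, ← hquad]
  set C := CInfo n S w τ l0 with hCdef
  have hnn1 : 0 ≤ u ⬝ᵥ (Mhat n S w x *ᵥ u) := by
    simpa using (Mhat_psd n hp S hS w hw x).dotProduct_mulVec_nonneg u
  have hnn2 := trace_sub_quad _ (Mhat_psd n hp S hS w hw l0) u huu
  rcases PhiA_le ht C (CInfo_herm n hp S hS w τ l0) (CInfo_ones n ht S w τ l0) u hu1 huu α β
    with h | h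
  · rw [h, zero_mul]
    have : 0 ≤ (t : ℝ) - 1 := by linarith
    positivity
  refine h.trans (mul_le_mul_of_nonneg_left ?_ (by linarith))
  refine add_le_add (mul_le_mul_of_nonneg_left ?_ (sq_nonneg _))
    (mul_le_mul_of_nonneg_left ?_ (sq_nonneg _))
  · -- direction of `τ`
    have hA : u ⬝ᵥ (Mc n S w x *ᵥ u) ≤ u ⬝ᵥ (Mhat n S w x *ᵥ u) := by
      have := (Mhat_sub_Mc_psd n hp S hS w x).dotProduct_mulVec_nonneg u
      rw [Matrix.sub_mulVec, dotProduct_sub] at this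
      simp only [star_trivial] at this
      linarith
    refine le_trans ?_ hA
    rw [hquad, hquad]
    refine div_le_div_of_nonneg_right ?_ hττ.le
    rw [hCdef, CInfo_eq n hp S hS]
    have hf : τ ⬝ᵥ (CD n S w 1 0 *ᵥ τ) = τ ⬝ᵥ (CD n S w 0 1 *ᵥ τ) := by
      rw [← CD_transpose n hp S hS w 0 1, Matrix.mulVec_transpose, dotProduct_comm,
        ← Matrix.dotProduct_mulVec]
    simp only [Mc, Matrix.sub_mulVec, Matrix.add_mulVec, Matrix.smul_mulVec,
      Matrix.vecMulVec_mulVec, dotProduct_sub, dotProduct_add, dotProduct_smul,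
      add_dotProduct, smul_dotProduct, smul_eq_mul, hf, op_smul_eq_smul]
    rw [dotProduct_comm (CD n S w 0 1 *ᵥ τ) τ, dotProduct_comm (CD n S w 1 1 *ᵥ τ) τ]
    set e := τ ⬝ᵥ (CD n S w 1 1 *ᵥ τ)
    set f := τ ⬝ᵥ (CD n S w 0 1 *ᵥ τ)
    have key : e⁻¹ * ((f + l0 * e) * (f + l0 * e)) =
        l0 * (f + f) + l0 ^ 2 * e + e * (f / e) ^ 2 := by
      field_simp
      ring
    have h2 : e * (x + f / e) ^ 2 = x ^ 2 * e + x * (f + f) + e * (f / e) ^ 2 := by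
      field_simp
      ring
    have h4 := mul_nonneg he.le (sq_nonneg (x + f / e))
    rw [key]
    linarith
  · have hD : (Mhat n S w l0 - C).PosSemidef := by
      have : Mhat n S w l0 - C = (Mhat n S w l0 - Mc n S w l0) +
          (τ ⬝ᵥ (CD n S w 1 1 *ᵥ τ))⁻¹ •
          vecMulVec ((CD n S w 0 1 + l0 • CD n S w 1 1) *ᵥ τ)
          ((CD n S w 0 1 + l0 • CD n S w 1 1) *ᵥ τ) := by
        rw [hCdef, CInfo_eq n hp S hS]
        abel
      rw [this]
      exact (Mhat_sub_Mc_psd n hp S hS w l0).add ((vecMulVec_psd _).smul (inv_pos.mpr he).le)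
    have := trace_sub_quad _ hD u huu
    rw [Matrix.trace_sub, Matrix.sub_mulVec, dotProduct_sub] at this
    linarith

/-! ### Averaging over the prior -/

lemma Bmat_mul_right {m t : ℕ} (N : Matrix (Fin m) (Fin t) ℝ)
    (hN : N *ᵥ (fun _ => (1 : ℝ)) = 0) : N * Bmat t = N := by
  have hJ : N * Jmat t = 0 := by
    ext i j
    have := congrFun hN i
    simpa [Matrix.mul_apply, Jmat, Matrix.mulVec, dotProduct] using this
  rw [Bmat, Matrix.mul_sub, Matrix.mul_one, Matrix.mul_smul, hJ, smul_zero, sub_zero]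

lemma dot_expand {t : ℕ} (N : Matrix (Fin t) (Fin t) ℝ) (τ : Fin t → ℝ) :
    (τ ⬝ᵥ (N *ᵥ τ)) / (τ ⬝ᵥ τ) = ∑ i, ∑ j, N i j * (τ i * τ j / (τ ⬝ᵥ τ)) := by
  have : τ ⬝ᵥ (N *ᵥ τ) = ∑ i, ∑ j, N i j * (τ i * τ j) := by
    simp only [dotProduct, Matrix.mulVec, Finset.mul_sum]
    refine Finset.sum_congr rfl fun i _ => Finset.sum_congr rfl fun j _ => ?_
    ring
  rw [this, Finset.sum_div]
  refine Finset.sum_congr rfl fun i _ => ?_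
  rw [Finset.sum_div]
  refine Finset.sum_congr rfl fun j _ => ?_
  rw [mul_div_assoc]

lemma prior_ae {t : ℕ} (g : Measure (Fin t → ℝ)) (hg : IsExchangeablePrior g) :
    ∀ᵐ τ ∂g, (∑ i, τ i) = 0 ∧ τ ≠ 0 := hg.2.1

lemma entry_integrable {t : ℕ} (g : Measure (Fin t → ℝ)) (hg : IsExchangeablePrior g)
    (i j : Fin t) : Integrable (fun τ : Fin t → ℝ => τ i * τ j / (τ ⬝ᵥ τ)) g := by
  have := hg.1
  refine Integrable.of_bound (C := 1) ?_ ?_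
  · apply Measurable.aestronglyMeasurable
    simp only [dotProduct]
    fun_prop
  · refine Filter.Eventually.of_forall fun τ => ?_
    rw [Real.norm_eq_abs, abs_div]
    have hnn : 0 ≤ τ ⬝ᵥ τ := by
      simp only [dotProduct]; exact Finset.sum_nonneg fun i _ => mul_self_nonneg _
    rw [abs_of_nonneg hnn]
    refine div_le_one_of_le₀ ?_ hnn
    have hs : ∀ k, τ k * τ k ≤ τ ⬝ᵥ τ := fun k =>
      Finset.single_le_sum (f := fun k => τ k * τ k) (fun i _ => mul_self_nonneg _)
        (Finset.mem_univ k)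
    have h1 := hs i
    have h2 := hs j
    rw [abs_le]
    constructor <;> nlinarith [sq_nonneg (τ i + τ j), sq_nonneg (τ i - τ j)]

lemma prior_entries {t : ℕ} (ht : 3 ≤ t) (g : Measure (Fin t → ℝ)) (hg : IsExchangeablePrior g)
    (i j : Fin t) : ∫ τ, τ i * τ j / (τ ⬝ᵥ τ) ∂g = ((t : ℝ) - 1)⁻¹ * Bmat t i j := by
  have := hg.1
  set A : Matrix (Fin t) (Fin t) ℝ := Matrix.of fun i j => ∫ τ, τ i * τ j / (τ ⬝ᵥ τ) ∂g with hA
  have hinv : ∀ (σ : Equiv.Perm (Fin t)) a b, A (σ a) (σ b) = A a b := by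
    intro σ a b
    simp only [hA, Matrix.of_apply]
    have hm : Measurable (fun (τ : Fin t → ℝ) (i : Fin t) => τ (σ i)) := by fun_prop
    conv_rhs => rw [← hg.2.2 σ]
    rw [integral_map hm.aemeasurable]
    · refine integral_congr_ae (Filter.Eventually.of_forall fun τ => ?_)
      simp only
      congr 1
      simp only [dotProduct]
      exact (Equiv.sum_comp σ (fun i => τ i * τ i)).symm
    · rw [hg.2.2 σ]
      exact (entry_integrable g hg a b).aestronglyMeasurable
  have hrow : ∀ a, ∑ b, A a b = 0 := by
    intro a
    simp only [hA, Matrix.of_apply]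
    rw [← integral_finsetSum _ (fun b _ => entry_integrable g hg a b)]
    apply integral_eq_zero_of_ae
    filter_upwards [prior_ae g hg] with τ hτ
    rw [← Finset.sum_div, ← Finset.mul_sum, hτ.1]
    simp
  have htr : A.trace = 1 := by
    simp only [hA, Matrix.trace, Matrix.diag, Matrix.of_apply]
    rw [← integral_finsetSum _ (fun b _ => entry_integrable g hg b b)]
    rw [integral_congr_ae (g := fun _ => (1 : ℝ))]
    · simp
    filter_upwards [prior_ae g hg] with τ hτ
    rw [← Finset.sum_div]
    have hττ : 0 < τ ⬝ᵥ τ := by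
      have h := dotProduct_star_self_pos_iff.mpr hτ.2
      simpa using h
    exact div_self hττ.ne'
  have h := compl_symm_of_invariant ht A hinv hrow
  have h2 := congrFun (congrFun h i) j
  rw [htr] at h2
  simpa [hA] using h2

lemma prior_quad_integrable {t : ℕ} (g : Measure (Fin t → ℝ))
    (hg : IsExchangeablePrior g) (N : Matrix (Fin t) (Fin t) ℝ) :
    Integrable (fun τ : Fin t → ℝ => (τ ⬝ᵥ (N *ᵥ τ)) / (τ ⬝ᵥ τ)) g := by
  simp only [dot_expand]
  exact integrable_finsetSum _ fun i _ => integrable_finsetSum _ fun j _ =>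
    (entry_integrable g hg i j).const_mul _

lemma prior_quad {t : ℕ} (ht : 3 ≤ t) (g : Measure (Fin t → ℝ)) (hg : IsExchangeablePrior g)
    (N : Matrix (Fin t) (Fin t) ℝ) (hN : N *ᵥ (fun _ => (1 : ℝ)) = 0) :
    ∫ τ, (τ ⬝ᵥ (N *ᵥ τ)) / (τ ⬝ᵥ τ) ∂g = ((t : ℝ) - 1)⁻¹ * N.trace := by
  simp only [dot_expand]
  have hI : ∀ i ∈ (Finset.univ : Finset (Fin t)),
      Integrable (fun τ : Fin t → ℝ => ∑ j, N i j * (τ i * τ j / (τ ⬝ᵥ τ))) g := fun i _ =>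
    integrable_finsetSum _ fun j _ => (entry_integrable g hg i j).const_mul _
  rw [integral_finsetSum _ hI]
  have e : ∀ i, ∫ τ, ∑ j, N i j * (τ i * τ j / (τ ⬝ᵥ τ)) ∂g =
      ((t : ℝ) - 1)⁻¹ * (N * Bmat t) i i := by
    intro i
    have hI2 : ∀ j ∈ (Finset.univ : Finset (Fin t)),
        Integrable (fun τ : Fin t → ℝ => N i j * (τ i * τ j / (τ ⬝ᵥ τ))) g := fun j _ =>
      (entry_integrable g hg i j).const_mul _
    rw [integral_finsetSum _ hI2]
    rw [Matrix.mul_apply, Finset.mul_sum]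
    refine Finset.sum_congr rfl fun j _ => ?_
    rw [integral_const_mul, prior_entries ht g hg]
    have : Bmat t i j = Bmat t j i := by
      conv_lhs => rw [← Bmat_transpose]
      rfl
    rw [this]
    ring
  rw [Finset.sum_congr rfl fun i _ => e i, ← Finset.mul_sum, Bmat_mul_right N hN]
  rfl

/-- Integrated upper bound. -/
lemma PhiCrit_bound {p t n : ℕ} (hp : 2 ≤ p) (ht : 3 ≤ t) (S : Matrix (Fin p) (Fin p) ℝ)
    (hS : S.PosDef) (g : Measure (Fin t → ℝ)) (hg : IsExchangeablePrior g)
    (w : TrtSeq p t → ℝ) (l0 x : ℝ) (hw : PhiAdmissible n S PhiA g l0 w) (α β : ℝ) :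
    PhiCrit n S PhiA g l0 w * (α + ((t : ℝ) - 2) * β) ^ 2 ≤
      n * (α ^ 2 * qD S w x + β ^ 2 * (((t : ℝ) - 2) * qD S w l0)) := by
  have h3 : (3 : ℝ) ≤ t := by exact_mod_cast ht
  have h1 : (t : ℝ) - 1 ≠ 0 := by linarith
  have := hg.1
  obtain ⟨hd, hpos, hintg⟩ := hw
  have i1 := prior_quad_integrable g hg (Mhat n S w x)
  have i2 := prior_quad_integrable g hg (Mhat n S w l0)
  have i3 : Integrable (fun τ : Fin t → ℝ =>
      α ^ 2 * ((τ ⬝ᵥ (Mhat n S w x *ᵥ τ)) / (τ ⬝ᵥ τ))) g := i1.const_mul _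
  have i4 : Integrable (fun τ : Fin t → ℝ => β ^ 2 * ((Mhat n S w l0).trace -
      (τ ⬝ᵥ (Mhat n S w l0 *ᵥ τ)) / (τ ⬝ᵥ τ))) g := ((integrable_const _).sub i2).const_mul _
  have hle := integral_mono_ae (μ := g)
    (f := fun τ => PhiA (CInfo n S w τ l0) * (α + ((t : ℝ) - 2) * β) ^ 2)
    (g := fun τ => ((t : ℝ) - 1) * (α ^ 2 * ((τ ⬝ᵥ (Mhat n S w x *ᵥ τ)) / (τ ⬝ᵥ τ)) +
        β ^ 2 * ((Mhat n S w l0).trace - (τ ⬝ᵥ (Mhat n S w l0 *ᵥ τ)) / (τ ⬝ᵥ τ))))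
    (hintg.mul_const _)
    ((i3.add i4).const_mul _)
    (by
      filter_upwards [prior_ae g hg, hpos] with τ hτ he
      exact PhiA_pointwise hp ht S hS w hd.1 τ l0 x hτ.1 hτ.2 he α β)
  rw [integral_mul_const, integral_const_mul,
    integral_add i3 i4,
    integral_const_mul, integral_const_mul, integral_sub (integrable_const _) i2,
    prior_quad ht g hg _ (Mhat_ones n ht S w x), prior_quad ht g hg _ (Mhat_ones n ht S w l0),
    Mhat_trace n hp S hS, Mhat_trace n hp S hS] at hle
  refine hle.trans (le_of_eq ?_)
  simp
  field_simp
  ring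

/-! ### Pseudo symmetric designs -/

lemma cD_sum {p t : ℕ} (n : ℕ) (S : Matrix (Fin p) (Fin p) ℝ) (w : TrtSeq p t → ℝ)
    (i j : Fin 2) : cD n S w i j = n * ∑ s, w s * cseq S s i j := by
  simp only [cD, ChatD, cseq, Matrix.trace_smul, Matrix.trace_sum, smul_eq_mul]

lemma n_qD {p t : ℕ} (n : ℕ) (S : Matrix (Fin p) (Fin p) ℝ) (w : TrtSeq p t → ℝ) (x : ℝ) :
    n * qD S w x = cD n S w 0 0 + 2 * cD n S w 0 1 * x + cD n S w 1 1 * x ^ 2 := by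
  simp only [cD_sum, qD, qSeq, mul_add, Finset.sum_add_distrib, Finset.mul_sum, Finset.sum_mul]
  congr 1
  · congr 1
    refine Finset.sum_congr rfl fun s _ => ?_
    ring
  · refine Finset.sum_congr rfl fun s _ => ?_
    ring

/-- The properties of pseudo symmetric designs used in the proof. -/
def Good {p t : ℕ} (n : ℕ) (S : Matrix (Fin p) (Fin p) ℝ) (w : TrtSeq p t → ℝ) : Prop :=
  IsDesign w ∧ (∀ i, gsum w i = 0) ∧
    ∀ i j, ChatD n S w i j = (cD n S w i j / ((t : ℝ) - 1)) • Bmat t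

lemma Good.CD {p t n : ℕ} {S : Matrix (Fin p) (Fin p) ℝ} {w : TrtSeq p t → ℝ}
    (h : Good n S w) (i j : Fin 2) :
    CD n S w i j = (cD n S w i j / ((t : ℝ) - 1)) • Bmat t := by
  rw [CD_eq, h.2.1 i, h.2.1 j, h.2.2 i j]
  simp

lemma gsum_eq {p t : ℕ} (w : TrtSeq p t → ℝ) (i : Fin 2) :
    gsum w i = (∑ s, w s • Gmat i s) * Bmat t := by
  simp only [gsum, Matrix.sum_mul, Matrix.smul_mul]

lemma good_of_ps {p t n : ℕ} (ht : 3 ≤ t) (S : Matrix (Fin p) (Fin p) ℝ)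
    (w : TrtSeq p t → ℝ) (hw : IsDesign w) (hps : IsPseudoSymmetric n S w) : Good n S w := by
  have hg : ∀ i, gsum w i = 0 := by
    intro i
    rw [gsum_eq]
    apply mul_Bmat_zero ht
    intro k a b
    simp only [Matrix.sum_apply, Matrix.smul_apply, smul_eq_mul, Gmat]
    have key : ∀ (k : Fin p) (a : Fin t),
        ∑ s : TrtSeq p t, w s * (if s k = a then (1 : ℝ) else 0) = 1 / (t : ℝ) := by
      intro k a
      rw [← hps.1 k a, Finset.sum_filter]
      simp
    by_cases hi : i = 0
    · simp only [hi, if_true, Tmat, Matrix.of_apply]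
      rw [key, key]
    · simp only [hi, if_false, Fmat, Matrix.of_apply]
      by_cases hk : (k : ℕ) = 0
      · simp [hk]
      · simp only [hk, if_false]
        rw [key, key]
  refine ⟨hw, hg, fun i j => ?_⟩
  apply compl_symm_of_invariant ht
  · obtain ⟨a, b, hab⟩ := hps.2 i j
    rw [CD_eq, hg i, hg j] at hab
    simp only [Matrix.transpose_zero, Matrix.zero_mul, smul_zero, sub_zero] at hab
    intro σ k l
    rw [hab]
    simp [Jmat, Matrix.one_apply]
  · intro a
    have := congrFun (ChatD_ones n ht S w i j) a
    simpa [Matrix.mulVec, dotProduct] using this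

lemma PhiA_rankone {t : ℕ} (ht : 3 ≤ t) (τ : Fin t → ℝ) (h1 : ∑ i, τ i = 0) (h0 : τ ≠ 0)
    (a b : ℝ) (ha : 0 < a) (hb : 0 < b) :
    PhiA (a • Bmat t - ((a - b) / (τ ⬝ᵥ τ)) • vecMulVec τ τ) =
      ((t : ℝ) - 1) * (b⁻¹ + ((t : ℝ) - 2) * a⁻¹)⁻¹ := by
  have hττ : 0 < τ ⬝ᵥ τ := by
    have h := dotProduct_star_self_pos_iff.mpr h0
    simpa using h
  set P : Matrix (Fin t) (Fin t) ℝ := (τ ⬝ᵥ τ)⁻¹ • vecMulVec τ τ with hP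
  have hPP : P * P = P := by
    rw [hP, Matrix.smul_mul, Matrix.mul_smul, Matrix.vecMulVec_mul_vecMulVec,
      Matrix.vecMulVec_smul, smul_smul, smul_smul]
    congr 1
    field_simp
  have hP1 : P *ᵥ (fun _ => (1 : ℝ)) = 0 := by
    rw [hP, Matrix.smul_mulVec, Matrix.vecMulVec_mulVec]
    have : τ ⬝ᵥ (fun _ => (1 : ℝ)) = 0 := by simpa [dotProduct] using h1
    rw [this]
    simp
  have hPB : P * Bmat t = P := Bmat_mul_right P hP1
  have hPT : Pᵀ = P := by rw [hP, Matrix.transpose_smul, vecMulVec_symm]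
  have hBP : Bmat t * P = P := by
    have := congrArg Matrix.transpose hPB
    rwa [Matrix.transpose_mul, Bmat_transpose, hPT] at this
  have hBB : Bmat t * Bmat t = Bmat t := Bmat_mul_right _ (Bmat_ones t ht)
  have hPtr : P.trace = 1 := by
    rw [hP, Matrix.trace_smul, Matrix.trace_vecMulVec, smul_eq_mul, inv_mul_cancel₀ hττ.ne']
  have hC : a • Bmat t - ((a - b) / (τ ⬝ᵥ τ)) • vecMulVec τ τ = a • (Bmat t - P) + b • P := by
    rw [div_eq_mul_inv, ← smul_smul, ← hP]
    module
  rw [hC]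
  have hQ : (Bmat t - P).PosSemidef := by
    have e : Bmat t - P = (Bmat t - P)ᴴ * (Bmat t - P) := by
      rw [Matrix.conjTranspose_eq_transpose_of_trivial, Matrix.transpose_sub, Bmat_transpose, hPT,
        Matrix.sub_mul, Matrix.mul_sub, Matrix.mul_sub, hBB, hBP, hPB, hPP]
      simp
    rw [e]
    exact Matrix.posSemidef_conjTranspose_mul_self _
  have hPpsd : P.PosSemidef := (vecMulVec_psd τ).smul (inv_pos.mpr hττ).le
  rw [PhiA_eq ht (a • (Bmat t - P) + b • P) (a⁻¹ • (Bmat t - P) + b⁻¹ • P)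
    ((hQ.smul ha.le).add (hPpsd.smul hb.le))]
  · simp only [Matrix.trace_add, Matrix.trace_smul, Matrix.trace_sub, hPtr, Bmat_trace t ht,
      smul_eq_mul]
    congr 2
    ring
  · simp only [Matrix.add_mulVec, Matrix.smul_mulVec, Matrix.sub_mulVec, hP1, Bmat_ones t ht,
      sub_zero, smul_zero, add_zero]
  · simp only [Matrix.add_mulVec, Matrix.smul_mulVec, Matrix.sub_mulVec, hP1, Bmat_ones t ht,
      sub_zero, smul_zero, add_zero]
  · have q1 : (Bmat t - P) * (Bmat t - P) = Bmat t - P := by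
      rw [Matrix.sub_mul, Matrix.mul_sub, Matrix.mul_sub, hBB, hBP, hPB, hPP]
      abel
    have q2 : (Bmat t - P) * P = 0 := by rw [Matrix.sub_mul, hBP, hPP, sub_self]
    have q3 : P * (Bmat t - P) = 0 := by rw [Matrix.mul_sub, hPB, hPP, sub_self]
    simp only [Matrix.add_mul, Matrix.mul_add, Matrix.smul_mul, Matrix.mul_smul, q1, q2, q3, hPP,
      smul_smul, smul_zero, add_zero, zero_add, mul_inv_cancel₀ ha.ne', mul_inv_cancel₀ hb.ne',
      inv_mul_cancel₀ ha.ne', inv_mul_cancel₀ hb.ne', one_smul, sub_add_cancel]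

lemma good_PhiA {p t n : ℕ} (hp : 2 ≤ p) (ht : 3 ≤ t) (hn : 1 ≤ n)
    (S : Matrix (Fin p) (Fin p) ℝ) (hS : S.PosDef) (w : TrtSeq p t → ℝ) (hw : Good n S w)
    (l0 : ℝ) (hc22 : 0 < cD n S w 1 1) (hq1 : 0 < qD S w (xD n S w)) (hq2 : 0 < qD S w l0)
    (τ : Fin t → ℝ) (h1 : ∑ i, τ i = 0) (h0 : τ ≠ 0) :
    0 < τ ⬝ᵥ (CD n S w 1 1 *ᵥ τ) ∧ PhiA (CInfo n S w τ l0) =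
      n * ((qD S w (xD n S w))⁻¹ + ((t : ℝ) - 2) * (qD S w l0)⁻¹)⁻¹ := by
  have h3 : (3 : ℝ) ≤ t := by exact_mod_cast ht
  have ht1 : 0 < (t : ℝ) - 1 := by linarith
  have hn0 : (0 : ℝ) < n := by exact_mod_cast hn
  have hττ : 0 < τ ⬝ᵥ τ := by
    have h := dotProduct_star_self_pos_iff.mpr h0
    simpa using h
  have he : τ ⬝ᵥ (CD n S w 1 1 *ᵥ τ) = cD n S w 1 1 / ((t : ℝ) - 1) * (τ ⬝ᵥ τ) := by
    rw [hw.CD, Matrix.smul_mulVec, Bmat_mulVec t τ h1, dotProduct_smul, smul_eq_mul]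
  refine ⟨by rw [he]; positivity, ?_⟩
  have hcomm : cD n S w 1 0 = cD n S w 0 1 := by
    simp only [cD_sum, cseq_comm hp S hS]
  have hql := n_qD n S w l0
  have hqx := n_qD n S w (xD n S w)
  set c00 := cD n S w 0 0
  set c01 := cD n S w 0 1 with hc01
  set c11 := cD n S w 1 1 with hc11
  have hx : xD n S w = -c01 / c11 := rfl
  have hMc : Mc n S w l0 = (n * qD S w l0 / ((t : ℝ) - 1)) • Bmat t := by
    rw [hql]
    simp only [Mc, hw.CD, hcomm]
    rw [← add_smul, smul_smul, smul_smul, ← add_smul, ← add_smul]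
    congr 1
    field_simp
    ring
  have hC : CInfo n S w τ l0 = (n * qD S w l0 / ((t : ℝ) - 1)) • Bmat t -
      ((n * qD S w l0 / ((t : ℝ) - 1) - n * qD S w (xD n S w) / ((t : ℝ) - 1)) / (τ ⬝ᵥ τ)) •
        vecMulVec τ τ := by
    rw [CInfo_eq n hp S hS, hMc, he]
    congr 1
    have hv : (CD n S w 0 1 + l0 • CD n S w 1 1) *ᵥ τ =
        ((c01 + l0 * c11) / ((t : ℝ) - 1)) • τ := by
      rw [hw.CD, hw.CD, smul_smul, ← add_smul, Matrix.smul_mulVec, Bmat_mulVec t τ h1]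
      congr 1
      rw [← hc01, ← hc11]
      ring
    rw [hv, Matrix.smul_vecMulVec, Matrix.vecMulVec_smul, smul_smul, smul_smul]
    congr 1
    rw [hql, hqx, hx]
    field_simp
    ring
  rw [hC, PhiA_rankone ht τ h1 h0 _ _ (by positivity) (by positivity)]
  have ht2 : 0 < (t : ℝ) - 2 := by linarith
  field_simp

lemma good_crit {p t n : ℕ} (hp : 2 ≤ p) (ht : 3 ≤ t) (hn : 1 ≤ n)
    (S : Matrix (Fin p) (Fin p) ℝ) (hS : S.PosDef) (g : Measure (Fin t → ℝ))
    (hg : IsExchangeablePrior g) (w : TrtSeq p t → ℝ) (hw : Good n S w)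
    (l0 : ℝ) (hc22 : 0 < cD n S w 1 1) (hq1 : 0 < qD S w (xD n S w)) (hq2 : 0 < qD S w l0) :
    PhiAdmissible n S PhiA g l0 w ∧ PhiCrit n S PhiA g l0 w =
      n * ((qD S w (xD n S w))⁻¹ + ((t : ℝ) - 2) * (qD S w l0)⁻¹)⁻¹ := by
  have := hg.1
  have hae : (fun τ => PhiA (CInfo n S w τ l0)) =ᵐ[g] fun _ =>
      n * ((qD S w (xD n S w))⁻¹ + ((t : ℝ) - 2) * (qD S w l0)⁻¹)⁻¹ := by
    filter_upwards [prior_ae g hg] with τ hτ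
    exact (good_PhiA hp ht hn S hS w hw l0 hc22 hq1 hq2 τ hτ.1 hτ.2).2
  refine ⟨⟨hw.1, ?_, ?_⟩, ?_⟩
  · filter_upwards [prior_ae g hg] with τ hτ
    exact (good_PhiA hp ht hn S hS w hw l0 hc22 hq1 hq2 τ hτ.1 hτ.2).1
  · exact (integrable_const _).congr hae.symm
  · rw [PhiCrit, integral_congr_ae hae]
    simp

/-! ### The orbit design of a sequence -/

/-- Uniform distribution on the orbit of `s` under relabelling. -/
def orbitDesign {p t : ℕ} (s : TrtSeq p t) : TrtSeq p t → ℝ :=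
  fun s' => ((Nat.factorial t : ℝ))⁻¹ *
    ∑ σ : Equiv.Perm (Fin t), if permSeq σ s = s' then (1 : ℝ) else 0

lemma orbit_sum {p t : ℕ} {V : Type*} [AddCommGroup V] [Module ℝ V] (s : TrtSeq p t)
    (f : TrtSeq p t → V) : ∑ s', orbitDesign s s' • f s' =
      ((Nat.factorial t : ℝ))⁻¹ • ∑ σ : Equiv.Perm (Fin t), f (permSeq σ s) := by
  simp only [orbitDesign, ← smul_smul, Finset.sum_smul, ite_smul, one_smul, zero_smul]
  rw [← Finset.smul_sum, Finset.sum_comm]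
  simp

lemma Gmat_perm {p t : ℕ} (σ : Equiv.Perm (Fin t)) (s : TrtSeq p t) (i : Fin 2) :
    Gmat i (permSeq σ s) = (Gmat i s).submatrix id σ.symm := by
  ext k a
  by_cases hi : i = 0 <;>
    simp [Gmat, hi, Tmat, Fmat, permSeq, Equiv.eq_symm_apply] <;> congr

lemma Bmat_perm {t : ℕ} (σ : Equiv.Perm (Fin t)) :
    (Bmat t).submatrix σ σ = Bmat t := by
  ext a b
  simp [Bmat, Jmat, Matrix.one_apply]

lemma Chat_perm {p t : ℕ} (S : Matrix (Fin p) (Fin p) ℝ) (σ : Equiv.Perm (Fin t))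
    (s : TrtSeq p t) (i j : Fin 2) :
    Chat S (permSeq σ s) i j = (Chat S s i j).submatrix σ.symm σ.symm := by
  have h : ∀ i, Gmat i (permSeq σ s) * Bmat t = (Gmat i s * Bmat t).submatrix id σ.symm := by
    intro i
    rw [Gmat_perm]
    nth_rewrite 1 [← Bmat_perm σ.symm]
    rw [Matrix.submatrix_mul_equiv]
  rw [Chat_eq, Chat_eq, h, h, Matrix.transpose_submatrix]
  ext a b
  simp [Matrix.mul_apply]

lemma orbit_good {p t n : ℕ} (ht : 3 ≤ t) (S : Matrix (Fin p) (Fin p) ℝ) (s : TrtSeq p t) :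
    Good n S (orbitDesign s) := by
  refine ⟨⟨fun s' => ?_, ?_⟩, fun i => ?_, fun i j => ?_⟩
  · unfold orbitDesign
    refine mul_nonneg (by positivity) (Finset.sum_nonneg fun σ _ => ?_)
    split_ifs <;> norm_num
  · have h := orbit_sum s (fun _ => (1 : ℝ))
    simp only [smul_eq_mul, mul_one] at h
    rw [h]
    simp [Fintype.card_perm, Nat.factorial_ne_zero]
  · rw [gsum_eq, orbit_sum]
    apply mul_Bmat_zero ht
    intro k a b
    simp only [Matrix.smul_apply, Matrix.sum_apply, Gmat_perm, Matrix.submatrix_apply, id]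
    congr 1
    refine Fintype.sum_equiv (Equiv.mulLeft (Equiv.swap a b)) _ _ fun σ => ?_
    congr 1
    change σ.symm a = σ.symm ((Equiv.swap a b).symm b)
    rw [Equiv.symm_swap, Equiv.swap_apply_right]
  · apply compl_symm_of_invariant ht
    · intro π a b
      rw [ChatD, orbit_sum]
      simp only [Matrix.smul_apply, Matrix.sum_apply, Chat_perm, Matrix.submatrix_apply]
      congr 2
      refine Fintype.sum_equiv (Equiv.mulLeft π⁻¹) _ _ fun σ => ?_
      congr 1
    · intro a
      have := congrFun (ChatD_ones n ht S (orbitDesign s) i j) a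
      simpa [Matrix.mulVec, dotProduct] using this

lemma orbit_cD {p t : ℕ} (n : ℕ) (S : Matrix (Fin p) (Fin p) ℝ) (s : TrtSeq p t)
    (i j : Fin 2) : cD n S (orbitDesign s) i j = n * cseq S s i j := by
  have h : ∀ σ : Equiv.Perm (Fin t), cseq S (permSeq σ s) i j = cseq S s i j := by
    intro σ
    simp only [cseq, Chat_perm, Matrix.trace, Matrix.diag, Matrix.submatrix_apply]
    exact Equiv.sum_comp σ.symm (fun a => Chat S s i j a a)
  have h2 := orbit_sum s (fun s' => cseq S s' i j)
  simp only [smul_eq_mul, h] at h2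
  rw [cD_sum, h2]
  simp [Fintype.card_perm, Nat.factorial_ne_zero]

lemma mix_ChatD {p t : ℕ} (n : ℕ) (S : Matrix (Fin p) (Fin p) ℝ) (w u : TrtSeq p t → ℝ)
    (e : ℝ) (i j : Fin 2) : ChatD n S (fun s => (1 - e) * w s + e * u s) i j =
      (1 - e) • ChatD n S w i j + e • ChatD n S u i j := by
  simp only [ChatD, Finset.smul_sum, ← Finset.sum_add_distrib]
  refine Finset.sum_congr rfl fun s _ => ?_
  module

lemma mix_cD {p t : ℕ} (n : ℕ) (S : Matrix (Fin p) (Fin p) ℝ) (w u : TrtSeq p t → ℝ)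
    (e : ℝ) (i j : Fin 2) : cD n S (fun s => (1 - e) * w s + e * u s) i j =
      (1 - e) * cD n S w i j + e * cD n S u i j := by
  simp only [cD, mix_ChatD, Matrix.trace_add, Matrix.trace_smul, smul_eq_mul]

lemma mix_good {p t n : ℕ} (S : Matrix (Fin p) (Fin p) ℝ) (w u : TrtSeq p t → ℝ)
    (hw : Good n S w) (hu : Good n S u) (e : ℝ) (he0 : 0 ≤ e) (he1 : e ≤ 1) :
    Good n S (fun s => (1 - e) * w s + e * u s) := by
  refine ⟨⟨fun s => ?_, ?_⟩, fun i => ?_, fun i j => ?_⟩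
  · exact add_nonneg (mul_nonneg (by linarith) (hw.1.1 s)) (mul_nonneg he0 (hu.1.1 s))
  · rw [Finset.sum_add_distrib, ← Finset.mul_sum, ← Finset.mul_sum, hw.1.2, hu.1.2]
    ring
  · have : gsum (fun s => (1 - e) * w s + e * u s) i = (1 - e) • gsum w i + e • gsum u i := by
      simp only [gsum, Finset.smul_sum, ← Finset.sum_add_distrib]
      refine Finset.sum_congr rfl fun s _ => ?_
      module
    rw [this, hw.2.1, hu.2.1]
    simp
  · rw [mix_ChatD, mix_cD, hw.2.2, hu.2.2, smul_smul, smul_smul, ← add_smul]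
    congr 1
    ring

lemma qSeq_nonneg {p t : ℕ} (hp : 2 ≤ p) (S : Matrix (Fin p) (Fin p) ℝ) (hS : S.PosDef)
    (s : TrtSeq p t) (x : ℝ) : 0 ≤ qSeq S s x := by
  rw [← qSeq_trace hp S hS]
  exact (Chat_psd hp S hS s x).trace_nonneg

lemma cseq_nonneg {p t : ℕ} (hp : 2 ≤ p) (S : Matrix (Fin p) (Fin p) ℝ) (hS : S.PosDef)
    (s : TrtSeq p t) : 0 ≤ cseq S s 1 1 := by
  rw [cseq, Chat_eq, ← Matrix.conjTranspose_eq_transpose_of_trivial]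
  exact ((Btil_posSemidef hp S hS).conjTranspose_mul_mul_same _).trace_nonneg

/-! ### The equivalence theorem -/

lemma deriv_arg (X L A D K m : ℝ) (hX : 0 < X) (hL : 0 < L)
    (h : ∀ e : ℝ, 0 < e → e ≤ 1 / 2 → 0 < X + e * A - K * e ^ 2 → 0 < L + e * D →
      X⁻¹ + m * L⁻¹ ≤ (X + e * A - K * e ^ 2)⁻¹ + m * (L + e * D)⁻¹) :
    A / X ^ 2 + m * D / L ^ 2 ≤ 0 := by
  have h1 : HasDerivAt (fun e : ℝ => X + e * A - K * e ^ 2) A 0 := by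
    have := (((hasDerivAt_id (0 : ℝ)).mul_const A).const_add X).sub
      (((hasDerivAt_id (0 : ℝ)).pow 2).const_mul K)
    refine HasDerivAt.congr_deriv this ?_
    simp
  have h2 : HasDerivAt (fun e : ℝ => L + e * D) D 0 := by
    have := ((hasDerivAt_id (0 : ℝ)).mul_const D).const_add L
    refine HasDerivAt.congr_deriv this ?_
    simp
  have h3 : HasDerivAt (fun e : ℝ => (X + e * A - K * e ^ 2)⁻¹ + m * (L + e * D)⁻¹)
      (-(A / X ^ 2 + m * D / L ^ 2)) 0 := by
    have := (h1.fun_inv (by simpa using hX.ne')).add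
      ((h2.fun_inv (by simpa using hL.ne')).const_mul m)
    refine HasDerivAt.congr_deriv this ?_
    simp
    ring
  have h4 := h3.tendsto_slope_zero_right
  have h5 : 0 ≤ -(A / X ^ 2 + m * D / L ^ 2) := by
    refine ge_of_tendsto h4 ?_
    have e1 : ∀ᶠ e in nhdsWithin (0 : ℝ) (Set.Ioi 0), 0 < X + e * A - K * e ^ 2 :=
      nhdsWithin_le_nhds (h1.continuousAt.eventually (lt_mem_nhds (by simpa using hX)))
    have e2 : ∀ᶠ e in nhdsWithin (0 : ℝ) (Set.Ioi 0), 0 < L + e * D :=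
      nhdsWithin_le_nhds (h2.continuousAt.eventually (lt_mem_nhds (by simpa using hL)))
    have e3 : ∀ᶠ e in nhdsWithin (0 : ℝ) (Set.Ioi 0), e < 1 / 2 :=
      nhdsWithin_le_nhds (gt_mem_nhds (by norm_num))
    filter_upwards [e1, e2, e3, self_mem_nhdsWithin] with e h1 h2 h3 h4
    have h4' : 0 < e := h4
    have := h e h4' h3.le h1 h2
    simp only [zero_add, zero_mul, smul_eq_mul]
    refine mul_nonneg (inv_pos.mpr h4').le ?_
    norm_num
    linarith
  linarith

lemma mix_qD {p t : ℕ} (S : Matrix (Fin p) (Fin p) ℝ) (w : TrtSeq p t → ℝ) (s : TrtSeq p t)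
    (e y : ℝ) : qD S (fun s' => (1 - e) * w s' + e * orbitDesign s s') y =
      (1 - e) * qD S w y + e * qSeq S s y := by
  have h := n_qD 1 S (fun s' => (1 - e) * w s' + e * orbitDesign s s') y
  have h2 := n_qD 1 S w y
  simp only [mix_cD, orbit_cD, Nat.cast_one, one_mul] at h h2
  rw [h, h2, qSeq]
  ring

lemma necessary {p t n : ℕ} (hp : 2 ≤ p) (ht : 3 ≤ t) (hn : 1 ≤ n)
    (S : Matrix (Fin p) (Fin p) ℝ) (hS : S.PosDef) (g : Measure (Fin t → ℝ))
    (hg : IsExchangeablePrior g) (w : TrtSeq p t → ℝ) (hw : Good n S w)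
    (l0 : ℝ) (hc22 : 0 < cD n S w 1 1) (hq1 : 0 < qD S w (xD n S w)) (hq2 : 0 < qD S w l0)
    (hopt : PhiOptimal n S PhiA g l0 w) (s : TrtSeq p t) :
    (qSeq S s (xD n S w) - qD S w (xD n S w)) / qD S w (xD n S w) ^ 2 +
      ((t : ℝ) - 2) * (qSeq S s l0 - qD S w l0) / qD S w l0 ^ 2 ≤ 0 := by
  have h3 : (3 : ℝ) ≤ t := by exact_mod_cast ht
  have hn0 : (0 : ℝ) < n := by exact_mod_cast hn
  have ht2 : 0 < (t : ℝ) - 2 := by linarith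
  set x := xD n S w with hx
  set c := cD n S w 1 1 / n with hc
  have hcpos : 0 < c := by positivity
  set b := 2 * cseq S s 0 1 + 2 * cseq S s 1 1 * x with hb
  have hcs := cseq_nonneg hp S hS s
  refine deriv_arg _ _ _ _ (b ^ 2 / (2 * c)) _ hq1 hq2 fun e he0 he1 hY hL => ?_
  have hgood := mix_good S w (orbitDesign s) hw (orbit_good ht S s) e he0.le (by linarith)
  set u : TrtSeq p t → ℝ := fun s' => (1 - e) * w s' + e * orbitDesign s s' with hu
  have hc22u : 0 < cD n S u 1 1 := by
    rw [hu, mix_cD, orbit_cD]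
    have : 0 < (1 - e) * cD n S w 1 1 := mul_pos (by linarith) hc22
    have : 0 ≤ e * (n * cseq S s 1 1) := by positivity
    linarith
  have hqu : qD S u l0 = qD S w l0 + e * (qSeq S s l0 - qD S w l0) := by
    rw [hu, mix_qD]
    ring
  have hqw : ∀ y, qD S w y = qD S w x + c * (y - x) ^ 2 := by
    intro y
    have e1 := n_qD n S w y
    have e2 := n_qD n S w x
    have e3 : cD n S w 0 1 = - x * cD n S w 1 1 := by
      rw [hx, xD]
      field_simp
    have e4 : cD n S w 1 1 = n * c := by
      rw [hc]
      field_simp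
    rw [e3, e4] at e1 e2
    have : (n : ℝ) * (qD S w y - (qD S w x + c * (y - x) ^ 2)) = 0 := by
      rw [mul_sub, e1, mul_add, e2]
      ring
    rcases mul_eq_zero.mp this with h | h
    · exact absurd h hn0.ne'
    · linarith
  have hYu : qD S w x + e * (qSeq S s x - qD S w x) - b ^ 2 / (2 * c) * e ^ 2 ≤
      qD S u (xD n S u) := by
    rw [hu, mix_qD, ← hu, hqw (xD n S u)]
    set y := xD n S u
    have hs : qSeq S s y = qSeq S s x + b * (y - x) + cseq S s 1 1 * (y - x) ^ 2 := by
      simp only [qSeq, hb]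
      ring
    rw [hs]
    set v := y - x
    have k1 : 0 ≤ (1 / 2 - e) * (c * v ^ 2) := mul_nonneg (by linarith) (by positivity)
    have k2 : 0 ≤ e * (cseq S s 1 1 * v ^ 2) := by positivity
    have k3 : 0 ≤ (c * v + e * b) ^ 2 / (2 * c) := by positivity
    have k4 : (c * v + e * b) ^ 2 / (2 * c) = c * v ^ 2 / 2 + e * b * v +
        b ^ 2 / (2 * c) * e ^ 2 := by
      field_simp
      ring
    rw [k4] at k3
    linarith
  have hYpos : 0 < qD S u (xD n S u) := lt_of_lt_of_le hY hYu
  have hLpos : 0 < qD S u l0 := by rw [hqu]; exact hL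
  obtain ⟨hadm, hcrit⟩ := good_crit hp ht hn S hS g hg u hgood l0 hc22u hYpos hLpos
  obtain ⟨-, hcritw⟩ := good_crit hp ht hn S hS g hg w hw l0 hc22 hq1 hq2
  have hle := hopt u hadm
  rw [hcrit, hcritw, ← hx] at hle
  have hle2 := le_of_mul_le_mul_left hle hn0
  have hle3 := (inv_le_inv₀ (by positivity) (by positivity)).mp hle2
  refine hle3.trans ?_
  rw [hqu]
  have := inv_anti₀ hY hYu
  linarith

/-- equivalence theorem for the A-criterion. -/
theorem stmt13 (p t n : ℕ) (hp : 2 ≤ p) (ht : 3 ≤ t) (hn : 1 ≤ n)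
    (S : Matrix (Fin p) (Fin p) ℝ) (hS : S.PosDef)
    (l0 : ℝ) (g : Measure (Fin t → ℝ)) (hg : IsExchangeablePrior g)
    (w : TrtSeq p t → ℝ) (hw : IsDesign w) (hps : IsPseudoSymmetric n S w)
    (hc22 : 0 < cD n S w 1 1)
    (hq1 : 0 < qD S w (xD n S w)) (hq2 : 0 < qD S w l0) :
    (PhiOptimal n S PhiA g l0 w ↔
      sSup (Set.range fun s : TrtSeq p t =>
        (qD S w l0 / (qD S w l0 + ((t : ℝ) - 2) * qD S w (xD n S w))) *
            (qSeq S s (xD n S w) / qD S w (xD n S w)) +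
          (1 - qD S w l0 / (qD S w l0 + ((t : ℝ) - 2) * qD S w (xD n S w))) *
            (qSeq S s l0 / qD S w l0)) = 1) ∧
    (PhiOptimal n S PhiA g l0 w → ∀ s : TrtSeq p t, 0 < w s →
      (qD S w l0 / (qD S w l0 + ((t : ℝ) - 2) * qD S w (xD n S w))) *
          (qSeq S s (xD n S w) / qD S w (xD n S w)) +
        (1 - qD S w l0 / (qD S w l0 + ((t : ℝ) - 2) * qD S w (xD n S w))) *
          (qSeq S s l0 / qD S w l0) = 1) := by
  have h3 : (3 : ℝ) ≤ t := by exact_mod_cast ht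
  have hn0 : (0 : ℝ) < n := by exact_mod_cast hn
  have ht2 : 0 < (t : ℝ) - 2 := by linarith
  have hgood := good_of_ps ht S w hw hps
  have hnec := necessary hp ht hn S hS g hg w hgood l0 hc22 hq1 hq2
  obtain ⟨-, hcritw⟩ := good_crit hp ht hn S hS g hg w hgood l0 hc22 hq1 hq2
  set x := xD n S w with hx
  set X := qD S w x with hX
  set L := qD S w l0 with hL
  set F : TrtSeq p t → ℝ := fun s => (L / (L + ((t : ℝ) - 2) * X)) * (qSeq S s x / X) +
    (1 - L / (L + ((t : ℝ) - 2) * X)) * (qSeq S s l0 / L) with hF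
  have hden : 0 < L + ((t : ℝ) - 2) * X := by positivity
  set K := X⁻¹ + ((t : ℝ) - 2) * L⁻¹ with hK
  have hKpos : 0 < K := by positivity
  -- the average of `F` under an arbitrary weight function
  have hFs : ∀ s, K * F s = (X⁻¹) ^ 2 * qSeq S s x + (L⁻¹) ^ 2 * (((t : ℝ) - 2) * qSeq S s l0) := by
    intro s
    simp only [hF, hK]
    field_simp
    ring
  have havg : ∀ v : TrtSeq p t → ℝ, K * ∑ s, v s * F s =
      (X⁻¹) ^ 2 * qD S v x + (L⁻¹) ^ 2 * (((t : ℝ) - 2) * qD S v l0) := by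
    intro v
    simp only [qD, Finset.mul_sum, ← Finset.sum_add_distrib]
    refine Finset.sum_congr rfl fun s _ => ?_
    have := hFs s
    linear_combination v s * this
  have hone : ∑ s, w s * F s = 1 := by
    have h := havg w
    rw [← hX, ← hL] at h
    have h2 : (X⁻¹) ^ 2 * X + (L⁻¹) ^ 2 * (((t : ℝ) - 2) * L) = K * 1 := by
      rw [hK]
      field_simp
    rw [h2] at h
    exact mul_left_cancel₀ hKpos.ne' h
  have hopt_iff : PhiOptimal n S PhiA g l0 w ↔ ∀ s, F s ≤ 1 := by
    constructor
    · intro hopt s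
      have h := hnec hopt s
      have h2 : K * (F s - 1) = (qSeq S s x - X) / X ^ 2 +
          ((t : ℝ) - 2) * (qSeq S s l0 - L) / L ^ 2 := by
        rw [mul_sub, hFs, hK]
        field_simp
        ring
      rw [← h2] at h
      by_contra hc
      have : 0 < K * (F s - 1) := mul_pos hKpos (by linarith [not_le.mp hc])
      linarith
    · intro hall v hv
      have hb := PhiCrit_bound hp ht S hS g hg v l0 x hv X⁻¹ L⁻¹
      rw [← havg v, ← hK] at hb
      have hs : ∑ s, v s * F s ≤ 1 := by
        rw [← hv.1.2]
        refine Finset.sum_le_sum fun s _ => ?_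
        have := mul_le_mul_of_nonneg_left (hall s) (hv.1.1 s)
        linarith
      rw [hcritw, ← div_eq_mul_inv, le_div_iff₀ hKpos]
      have h5 : PhiCrit n S PhiA g l0 v * K * K ≤ n * K := by
        have : (n : ℝ) * (K * ∑ s, v s * F s) ≤ n * (K * 1) := by gcongr
        calc _ = PhiCrit n S PhiA g l0 v * K ^ 2 := by ring
          _ ≤ _ := hb
          _ ≤ n * (K * 1) := this
          _ = _ := by ring
      exact le_of_mul_le_mul_right h5 hKpos
  have hbdd : BddAbove (Set.range F) := (Set.finite_range F).bddAbove
  have hlower : 1 ≤ sSup (Set.range F) := by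
    calc (1 : ℝ) = ∑ s, w s * F s := hone.symm
      _ ≤ ∑ s, w s * sSup (Set.range F) := Finset.sum_le_sum fun s _ =>
          mul_le_mul_of_nonneg_left (le_csSup hbdd (Set.mem_range_self s)) (hw.1 s)
      _ = sSup (Set.range F) := by rw [← Finset.sum_mul, hw.2, one_mul]
  refine ⟨?_, ?_⟩
  · rw [hopt_iff]
    constructor
    · intro hall
      refine le_antisymm ?_ hlower
      have hne : (Set.range F).Nonempty := ⟨_, Set.mem_range_self (fun _ => ⟨0, by omega⟩)⟩
      refine csSup_le hne ?_
      rintro _ ⟨s, rfl⟩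
      exact hall s
    · intro hsup s
      rw [← hsup]
      exact le_csSup hbdd (Set.mem_range_self s)
  · intro hopt s hs
    have hall := hopt_iff.mp hopt
    have hz : ∑ s, w s * (1 - F s) = 0 := by
      simp only [mul_sub, mul_one, Finset.sum_sub_distrib, hone, hw.2, sub_self]
    have h0 := (Finset.sum_eq_zero_iff_of_nonneg (fun s _ =>
      mul_nonneg (hw.1 s) (by linarith [hall s]))).mp hz s (Finset.mem_univ s)
    rcases mul_eq_zero.mp h0 with h | h
    · exact absurd h hs.ne'
    · have : F s = 1 := by linarith
      exact this
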